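/- arXiv:1402.0604 — 2 statements merged into one kernel-verified Lean document; each statement's English description precedes it below -/
import Mathlib

section
/- There exist constants C, c > 0 and h₀ > 0 such that for every h ∈ (0,h₀) there are E₀ = E₀(h) ∈ ℝ with |E₀ − 1| ≤ C h and v = v(·;h) ∈ C^∞([−R,R]) satisfying: (P(h) − E₀)v = 0 on [−R,R]; ‖v‖_{L²(−3.5,3.5)} ≥ C^{−1}; and ‖v‖_{H¹_h({R−1<|x|<R})} ≤ C e^{−c/h}. -/
open MeasureTheory Set Real

noncomputable section

/-- The `L²` norm of `u` over the set `I`. -/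
def l2Norm (I : Set ℝ) (u : ℝ → ℝ) : ℝ :=
  Real.sqrt (∫ x in I, ‖u x‖ ^ 2)

/-- The semiclassical `H¹_h` norm of `u` (with derivative `u'`) over the set `I`. -/
def h1Norm (h : ℝ) (I : Set ℝ) (u u' : ℝ → ℝ) : ℝ :=
  Real.sqrt ((∫ x in I, ‖u x‖ ^ 2) + ∫ x in I, ‖h * u' x‖ ^ 2)

/-!
Let `b` be the outer end of the barrier `{V > E}`, where `E = V 0`. An even solution `v` of
`(P(h) - E₀) v = 0` is determined by its Prüfer angle, started from `0` at the origin. On the scale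
`√h` of the well, changing `E₀` by `O(h)` moves the angle by at least `π`, so some `E₀ = E + O(h)`
makes `v` vanish at a point `b₁` just inside `b`.

In the barrier `y = -h v v'` satisfies `h y' = -((h v')² + (V - E₀) v²)`. It vanishes at `b₁`, so it
is nonnegative and grows at least like `e^{2κ (d - x) / h}` as `x` decreases through an interval
`[c, d]` where `V - E₀ ≥ κ²`. Hence `h v'(b₁)` is exponentially small relative to the mass of `v`.
Crossing the turning point costs at most a factor `e^{2κ (b₂ - b₁) / h}`, and `b₂ - b₁` can be taken
small compared with `d - c`. Beyond `b₂` the energy `(h v')² - (V - E₀) v²` is positive definite and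
grows by a factor bounded uniformly in `h`.
-/

open scoped Topology NNReal

section ODE

variable {E : Type*} [NormedAddCommGroup E] [NormedSpace ℝ E]

lemma eqOn_ball_of_hasDerivAt_of_lipschitz {F : ℝ → E → E} {t₀ T : ℝ} {α β : ℝ → E}
    (hlip : ∀ a b, ∃ K : ℝ≥0, ∀ t ∈ Icc a b, LipschitzWith K (F t))
    (hα : ∀ t ∈ Metric.ball t₀ T, HasDerivAt α (F t (α t)) t)
    (hβ : ∀ t ∈ Metric.ball t₀ T, HasDerivAt β (F t (β t)) t) (h₀ : α t₀ = β t₀) :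
    EqOn α β (Metric.ball t₀ T) := by
  rcases le_or_gt T 0 with hT | hT
  · simp [Metric.ball_eq_empty.2 hT]
  obtain ⟨K, hK⟩ := hlip (t₀ - T) (t₀ + T)
  rw [Real.ball_eq_Ioo] at hα hβ ⊢
  exact ODE_solution_unique_of_mem_Ioo (v := F) (s := fun _ ↦ univ)
    (fun t ht ↦ (hK t (Ioo_subset_Icc_self ht)).lipschitzOnWith)
    ⟨by linarith, by linarith⟩
    (fun t ht ↦ ⟨hα t ht, trivial⟩) (fun t ht ↦ ⟨hβ t ht, trivial⟩) h₀

lemma exists_hasDerivAt_ball_of_lipschitz_of_bounded [CompleteSpace E] {F : ℝ → E → E}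
    (hlip : ∀ a b, ∃ K : ℝ≥0, ∀ t ∈ Icc a b, LipschitzWith K (F t))
    (hbdd : ∀ a b, ∃ L : ℝ≥0, ∀ t ∈ Icc a b, ∀ x, ‖F t x‖ ≤ L)
    (hcont : ∀ x, Continuous fun t ↦ F t x) (t₀ : ℝ) (x₀ : E) {T : ℝ} (hT : 0 ≤ T) :
    ∃ α : ℝ → E, α t₀ = x₀ ∧ ∀ t ∈ Metric.ball t₀ T, HasDerivAt α (F t (α t)) t := by
  obtain ⟨K, hK⟩ := hlip (t₀ - T) (t₀ + T)
  obtain ⟨L, hL⟩ := hbdd (t₀ - T) (t₀ + T)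
  have ht₀ : t₀ ∈ Icc (t₀ - T) (t₀ + T) := ⟨by linarith, by linarith⟩
  have hPL : IsPicardLindelof F (⟨t₀, ht₀⟩ : Icc (t₀ - T) (t₀ + T)) x₀
      (L * T.toNNReal) 0 L K :=
    { lipschitzOnWith := fun t ht ↦ (hK t ht).lipschitzOnWith
      continuousOn := fun x _ ↦ (hcont x).continuousOn
      norm_le := fun t ht x _ ↦ hL t ht x
      mul_max_le := by simp [hT] }
  obtain ⟨α, hα₀, hα⟩ := hPL.exists_eq_forall_mem_Icc_hasDerivWithinAt₀
  rw [Real.ball_eq_Ioo]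
  exact ⟨α, hα₀, fun t ht ↦
    (hα t (Ioo_subset_Icc_self ht)).hasDerivAt (Icc_mem_nhds ht.1 ht.2)⟩

theorem exists_forall_hasDerivAt_of_lipschitz_of_bounded [CompleteSpace E] {F : ℝ → E → E}
    (hlip : ∀ a b, ∃ K : ℝ≥0, ∀ t ∈ Icc a b, LipschitzWith K (F t))
    (hbdd : ∀ a b, ∃ L : ℝ≥0, ∀ t ∈ Icc a b, ∀ x, ‖F t x‖ ≤ L)
    (hcont : ∀ x, Continuous fun t ↦ F t x) (t₀ : ℝ) (x₀ : E) :
    ∃ α : ℝ → E, α t₀ = x₀ ∧ ∀ t, HasDerivAt α (F t (α t)) t := by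
  choose A hA₀ hA using fun n : ℕ ↦
    exists_hasDerivAt_ball_of_lipschitz_of_bounded hlip hbdd hcont t₀ x₀
      (by positivity : (0 : ℝ) ≤ n + 1)
  have hA_eq_of_le : ∀ m n : ℕ, m ≤ n → EqOn (A m) (A n) (Metric.ball t₀ (m + 1)) :=
    fun m n hmn ↦ eqOn_ball_of_hasDerivAt_of_lipschitz hlip (hA m)
      (fun t ht ↦ hA n t (Metric.ball_subset_ball (by gcongr) ht)) (by rw [hA₀, hA₀])
  have hA_eq : ∀ m n : ℕ, ∀ t ∈ Metric.ball t₀ (m + 1), t ∈ Metric.ball t₀ (n + 1) →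
      A m t = A n t := fun m n t hm hn ↦
    (le_total m n).elim (fun h ↦ hA_eq_of_le m n h hm) fun h ↦ (hA_eq_of_le n m h hn).symm
  have h_mem : ∀ t, t ∈ Metric.ball t₀ (⌈dist t t₀⌉₊ + 1 : ℝ) := fun t ↦
    Metric.mem_ball.2 (lt_add_of_le_of_pos (Nat.le_ceil _) one_pos)
  refine ⟨fun t ↦ A ⌈dist t t₀⌉₊ t, by simp [hA₀], fun t ↦ ?_⟩
  refine (hA _ t (h_mem t)).congr_of_eventuallyEq ?_
  filter_upwards [Metric.isOpen_ball.mem_nhds (h_mem t)] with s hs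
  exact hA_eq _ _ s (h_mem s) hs

lemma image_le_image_of_deriv_le_of_le_deriv {F : ℝ → ℝ → ℝ} {K : ℝ≥0} {α β α' β' : ℝ → ℝ}
    {a b : ℝ} (hF : ∀ t ∈ Icc a b, LipschitzWith K (F t))
    (hα : ∀ t ∈ Icc a b, HasDerivAt α (α' t) t) (hβ : ∀ t ∈ Icc a b, HasDerivAt β (β' t) t)
    (hα' : ∀ t ∈ Icc a b, α' t ≤ F t (α t)) (hβ' : ∀ t ∈ Icc a b, F t (β t) ≤ β' t)
    (hab : α a ≤ β a) {t : ℝ} (ht : t ∈ Icc a b) : α t ≤ β t := by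
  have hsub : ∀ s ∈ Icc a b, HasDerivAt (fun s ↦ α s - β s) (α' s - β' s) s :=
    fun s hs ↦ (hα s hs).sub (hβ s hs)
  -- A positive barrier growing at a rate strictly above `K` is never reached by `α - β`.
  have hbarrier : ∀ ε > 0, α t - β t ≤ ε * exp ((K + 1) * (t - a)) := by
    intro ε hε
    refine image_le_of_deriv_right_lt_deriv_boundary (f := fun s ↦ α s - β s)
      (B := fun s ↦ ε * exp ((K + 1) * (s - a)))
      (B' := fun s ↦ ε * (exp ((K + 1) * (s - a)) * ((K + 1) * 1)))
      (fun s hs ↦ (hsub s hs).continuousAt.continuousWithinAt)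
      (fun s hs ↦ (hsub s (Ico_subset_Icc_self hs)).hasDerivWithinAt) ?_ ?_ ?_ ht
    · simp only [sub_self, mul_zero, exp_zero, mul_one]
      linarith
    · exact fun s ↦ ((((hasDerivAt_id s).sub_const a).const_mul ((K : ℝ) + 1)).exp).const_mul ε
    · intro s hs heq
      have hs' := Ico_subset_Icc_self hs
      have hpos : 0 < ε * exp ((K + 1) * (s - a)) := by positivity
      have hlip := (hF s hs').dist_le_mul (α s) (β s)
      rw [Real.dist_eq, Real.dist_eq, heq, abs_of_pos hpos] at hlip
      calc α' s - β' s ≤ F s (α s) - F s (β s) := sub_le_sub (hα' s hs') (hβ' s hs')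
        _ ≤ K * (ε * exp ((K + 1) * (s - a))) := (le_abs_self _).trans hlip
        _ < ε * (exp ((K + 1) * (s - a)) * ((K + 1) * 1)) := by linarith
  refine sub_nonpos.1 (le_of_forall_pos_le_add fun ε hε ↦ ?_)
  have := hbarrier (ε / exp ((K + 1) * (t - a))) (by positivity)
  rwa [div_mul_cancel₀ _ (exp_pos _).ne', ← zero_add ε] at this

end ODE

section Calculus

lemma image_sub_le_mul_sub_of_hasDerivAt_le {f f' : ℝ → ℝ} {a b C : ℝ} (hab : a ≤ b)
    (hf : ∀ x ∈ Icc a b, HasDerivAt f (f' x) x) (hf' : ∀ x ∈ Icc a b, f' x ≤ C) :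
    f b - f a ≤ C * (b - a) :=
  (convex_Icc a b).image_sub_le_mul_sub_of_deriv_le
    (fun x hx ↦ (hf x hx).continuousAt.continuousWithinAt)
    (fun x hx ↦ (hf x (interior_subset hx)).differentiableAt.differentiableWithinAt)
    (fun x hx ↦ (hf x (interior_subset hx)).deriv ▸ hf' x (interior_subset hx))
    a (left_mem_Icc.2 hab) b (right_mem_Icc.2 hab) hab

lemma le_mul_exp_of_hasDerivAt_le_mul {f f' : ℝ → ℝ} {a b K : ℝ} (hab : a ≤ b)
    (hf : ∀ x ∈ Icc a b, HasDerivAt f (f' x) x) (hf' : ∀ x ∈ Icc a b, f' x ≤ K * f x) :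
    f b ≤ f a * exp (K * (b - a)) := by
  rw [← gronwallBound_ε0]
  refine le_gronwallBound_of_liminf_deriv_right_le (f' := f')
    (fun x hx ↦ (hf x hx).continuousAt.continuousWithinAt) (fun x hx r hr ↦ ?_) le_rfl
    (fun x hx ↦ by simpa using hf' x (Ico_subset_Icc_self hx)) b (right_mem_Icc.2 hab)
  exact (hf x (Ico_subset_Icc_self hx)).hasDerivWithinAt.liminf_right_slope_le hr

lemma even_intervalIntegral_of_odd {g : ℝ → ℝ} (hg : Function.Odd g) :
    Function.Even fun x ↦ ∫ t in (0 : ℝ)..x, g t := by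
  intro x
  have := intervalIntegral.integral_comp_neg g (a := 0) (b := x)
  simp only [hg _, intervalIntegral.integral_neg, neg_zero] at this
  beta_reduce
  rw [intervalIntegral.integral_symm, ← this, neg_neg]

lemma deriv_zero_of_even {f : ℝ → ℝ} (hf : Function.Even f) : deriv f 0 = 0 := by
  have := deriv_comp_neg f (0 : ℝ)
  rw [funext hf, neg_zero] at this
  linarith

lemma exists_abs_sub_le_mul_sq_of_even {f : ℝ → ℝ} (hf : ContDiff ℝ 2 f)
    (hf_even : Function.Even f) {b : ℝ} (hb : 0 < b) :
    ∃ C, ∀ x ∈ Icc 0 b, |f x - f 0| ≤ C * x ^ 2 := by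
  obtain ⟨C, hC⟩ := exists_taylor_mean_remainder_bound (n := 1) hb.le
    (hf.of_le (by norm_num)).contDiffOn
  refine ⟨C, fun x hx ↦ ?_⟩
  have hderiv : derivWithin f (Icc 0 b) 0 = 0 := by
    rw [(hf.differentiable (by norm_num) 0).derivWithin
      (uniqueDiffOn_Icc hb 0 (left_mem_Icc.2 hb.le)), deriv_zero_of_even hf_even]
  simpa [taylorWithinEval_succ, iteratedDerivWithin_one, hderiv] using hC x hx

lemma exists_cos_eq_zero_of_add_pi_le {y z : ℝ} (h : y + π ≤ z) :
    ∃ θ ∈ Icc y z, cos θ = 0 := by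
  have hsign : (0 : ℝ) ∈ uIcc (cos y) (cos (y + π)) := by
    rw [cos_add_pi, mem_uIcc]
    rcases le_total 0 (cos y) with hy | hy
    · exact Or.inr ⟨by linarith, hy⟩
    · exact Or.inl ⟨hy, by linarith⟩
  obtain ⟨θ, hθ, hcos⟩ := intermediate_value_uIcc continuous_cos.continuousOn hsign
  rw [uIcc_of_le (by linarith [pi_pos])] at hθ
  exact ⟨θ, ⟨hθ.1, hθ.2.trans h⟩, hcos⟩

end Calculus

/-- The equation `-h² u'' + W u = 0` as a first-order system for `u` and the semiclassical momentum
`p = h u'`. For the eigenvalue equation `(P(h) - E) u = 0`, take `W = V - E`. -/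
structure SchrodingerSolution (h : ℝ) (W u p : ℝ → ℝ) : Prop where
  hasDerivAt : ∀ x, HasDerivAt u (p x / h) x
  hasDerivAt_momentum : ∀ x, HasDerivAt p (W x * u x / h) x

namespace SchrodingerSolution

variable {h : ℝ} {W u p : ℝ → ℝ}

lemma continuous (hs : SchrodingerSolution h W u p) : Continuous u :=
  continuous_iff_continuousAt.2 fun x ↦ (hs.hasDerivAt x).continuousAt

lemma deriv_eq (hs : SchrodingerSolution h W u p) : deriv u = fun x ↦ p x / h :=
  funext fun x ↦ (hs.hasDerivAt x).deriv

lemma neg_sq_mul_deriv_deriv_add (hs : SchrodingerSolution h W u p) (hh : h ≠ 0) (x : ℝ) :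
    -h ^ 2 * deriv (deriv u) x + W x * u x = 0 := by
  rw [hs.deriv_eq, ((hs.hasDerivAt_momentum x).div_const h).deriv]
  field_simp
  ring

lemma div_const (hs : SchrodingerSolution h W u p) (N : ℝ) :
    SchrodingerSolution h W (fun x ↦ u x / N) (fun x ↦ p x / N) where
  hasDerivAt x := ((hs.hasDerivAt x).div_const N).congr_deriv (by ring)
  hasDerivAt_momentum x := ((hs.hasDerivAt_momentum x).div_const N).congr_deriv (by ring)

lemma rescale (hs : SchrodingerSolution h W u p) {s : ℝ} (hs₀ : s ≠ 0) :
    SchrodingerSolution (s * h) (fun x ↦ s ^ 2 * W x) u (fun x ↦ s * p x) where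
  hasDerivAt x := (hs.hasDerivAt x).congr_deriv (by field_simp)
  hasDerivAt_momentum x :=
    ((hs.hasDerivAt_momentum x).const_mul s).congr_deriv (by field_simp)

lemma contDiff (hs : SchrodingerSolution h W u p) (hW : ContDiff ℝ (⊤ : ℕ∞) W) :
    ContDiff ℝ (⊤ : ℕ∞) u := by
  have hp_deriv : deriv p = fun x ↦ W x * u x / h :=
    funext fun x ↦ (hs.hasDerivAt_momentum x).deriv
  suffices ∀ n : ℕ, ContDiff ℝ n u ∧ ContDiff ℝ n p from contDiff_infty.2 fun n ↦ (this n).1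
  intro n
  induction n with
  | zero =>
    exact ⟨contDiff_zero.2 hs.continuous, contDiff_zero.2 <|
      continuous_iff_continuousAt.2 fun x ↦ (hs.hasDerivAt_momentum x).continuousAt⟩
  | succ n ih =>
    have hWn : ContDiff ℝ n W := hW.of_le (by exact_mod_cast le_top)
    push_cast
    refine ⟨contDiff_succ_iff_deriv.2 ⟨fun x ↦ (hs.hasDerivAt x).differentiableAt, by simp, ?_⟩,
      contDiff_succ_iff_deriv.2
        ⟨fun x ↦ (hs.hasDerivAt_momentum x).differentiableAt, by simp, ?_⟩⟩
    · rw [hs.deriv_eq]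
      exact ih.2.div_const h
    · rw [hp_deriv]
      exact (hWn.mul ih.1).div_const h

end SchrodingerSolution

/-- The right-hand side of the Prüfer equation `h θ' = W cos² θ - sin² θ`, satisfied by the angle
`θ` of a solution written as `u = ρ cos θ`, `h u' = ρ sin θ`. -/
def prueferField (h : ℝ) (W : ℝ → ℝ) (x θ : ℝ) : ℝ :=
  (W x * cos θ ^ 2 - sin θ ^ 2) / h

/-- A Prüfer angle for `-h² u'' + W u = 0`, normalized by `θ 0 = 0`, which corresponds to
`u' 0 = 0` and hence, for an even `W`, to the even solutions. -/
structure IsPrueferAngle (h : ℝ) (W θ : ℝ → ℝ) : Prop where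
  map_zero : θ 0 = 0
  hasDerivAt : ∀ x, HasDerivAt θ (prueferField h W x (θ x)) x

section Pruefer

variable {h : ℝ} {W : ℝ → ℝ}

lemma prueferField_eq (h : ℝ) (W : ℝ → ℝ) (x θ : ℝ) :
    prueferField h W x θ = ((W x + 1) * cos θ ^ 2 - 1) / h := by
  rw [prueferField, sin_sq]
  ring

lemma lipschitzWith_prueferField {M : ℝ≥0} {x : ℝ} (hM : |W x| ≤ M) :
    LipschitzWith ((M + 1) * 2 / ‖h‖₊) (prueferField h W x) := by
  refine LipschitzWith.of_dist_le_mul fun θ φ ↦ ?_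
  have hfactor : prueferField h W x θ - prueferField h W x φ =
      (W x + 1) * ((cos θ + cos φ) * (cos θ - cos φ)) / h := by
    rw [prueferField_eq, prueferField_eq]
    ring
  have hW : |W x + 1| ≤ M + 1 := (abs_add_le _ _).trans (by simpa using hM)
  have hsum : |cos θ + cos φ| ≤ 2 :=
    (abs_add_le _ _).trans (by linarith [abs_cos_le_one θ, abs_cos_le_one φ])
  have hsub : |cos θ - cos φ| ≤ |θ - φ| := by
    simpa [Real.dist_eq] using lipschitzWith_cos.dist_le_mul θ φ
  rw [Real.dist_eq, Real.dist_eq, hfactor, abs_div, abs_mul, abs_mul]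
  calc |W x + 1| * (|cos θ + cos φ| * |cos θ - cos φ|) / |h|
      ≤ (M + 1) * (2 * |θ - φ|) / |h| := by gcongr
    _ = ((M + 1) * 2 / ‖h‖₊ : ℝ≥0) * |θ - φ| := by
      push_cast
      rw [Real.norm_eq_abs]
      ring

lemma norm_prueferField_le {M : ℝ≥0} {x : ℝ} (hM : |W x| ≤ M) (θ : ℝ) :
    ‖prueferField h W x θ‖ ≤ ((M + 1) / ‖h‖₊ : ℝ≥0) := by
  push_cast
  rw [prueferField, norm_div, Real.norm_eq_abs]
  gcongr
  calc |W x * cos θ ^ 2 - sin θ ^ 2| ≤ |W x * cos θ ^ 2| + |sin θ ^ 2| := abs_sub _ _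
    _ = |W x| * cos θ ^ 2 + sin θ ^ 2 := by
      rw [abs_mul, abs_of_nonneg (sq_nonneg (cos θ)), abs_of_nonneg (sq_nonneg (sin θ))]
    _ ≤ M * 1 + 1 := by
      gcongr
      exacts [cos_sq_le_one θ, sin_sq_le_one θ]
    _ = M + 1 := by rw [mul_one]

lemma exists_forall_abs_le_of_continuous (hW : Continuous W) (a b : ℝ) :
    ∃ M : ℝ≥0, ∀ x ∈ Icc a b, |W x| ≤ M := by
  obtain ⟨M, hM⟩ := isCompact_Icc.exists_bound_of_continuousOn hW.continuousOn
  exact ⟨M.toNNReal, fun x hx ↦ (hM x hx).trans (Real.le_coe_toNNReal M)⟩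

lemma exists_lipschitzWith_prueferField (hW : Continuous W) (a b : ℝ) :
    ∃ K : ℝ≥0, ∀ x ∈ Icc a b, LipschitzWith K (prueferField h W x) :=
  let ⟨_, hM⟩ := exists_forall_abs_le_of_continuous hW a b
  ⟨_, fun x hx ↦ lipschitzWith_prueferField (hM x hx)⟩

lemma exists_isPrueferAngle (h : ℝ) (hW : Continuous W) : ∃ θ, IsPrueferAngle h W θ := by
  obtain ⟨θ, hθ₀, hθ⟩ := exists_forall_hasDerivAt_of_lipschitz_of_bounded (F := prueferField h W)
    (exists_lipschitzWith_prueferField hW)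
    (fun a b ↦
      let ⟨_, hM⟩ := exists_forall_abs_le_of_continuous hW a b
      ⟨_, fun x hx ↦ norm_prueferField_le (hM x hx)⟩)
    (fun θ ↦ by unfold prueferField; fun_prop) 0 0
  exact ⟨θ, hθ₀, hθ⟩

namespace IsPrueferAngle

variable {θ : ℝ → ℝ}

lemma continuous (hθ : IsPrueferAngle h W θ) : Continuous θ :=
  continuous_iff_continuousAt.2 fun x ↦ (hθ.hasDerivAt x).continuousAt

lemma odd (hθ : IsPrueferAngle h W θ) (hW : Continuous W) (hW_even : Function.Even W) :
    Function.Odd θ := by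
  have hreflect (x : ℝ) : HasDerivAt (fun x ↦ -θ (-x)) (prueferField h W x (-θ (-x))) x :=
    ((hθ.hasDerivAt (-x)).comp x (hasDerivAt_neg x)).neg.congr_deriv (by
      simp [prueferField, hW_even x])
  intro x
  have := eqOn_ball_of_hasDerivAt_of_lipschitz (T := |x| + 1) (t₀ := 0)
    (exists_lipschitzWith_prueferField hW) (fun t _ ↦ hreflect t) (fun t _ ↦ hθ.hasDerivAt t)
    (by simp [hθ.map_zero]) (show x ∈ Metric.ball 0 (|x| + 1) by simp)
  linarith

theorem exists_schrodingerSolution (hθ : IsPrueferAngle h W θ) (hW : Continuous W)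
    (hW_even : Function.Even W) :
    ∃ u p, SchrodingerSolution h W u p ∧ Function.Even u ∧ Function.Odd p ∧ u 0 = 1 ∧
      ∀ x, cos (θ x) = 0 → u x = 0 := by
  have hθ_odd := hθ.odd hW hW_even
  have hθ_cont := hθ.continuous
  -- `g` is the logarithmic derivative of the Prüfer amplitude.
  let g : ℝ → ℝ := fun x ↦ (1 + W x) * (cos (θ x) * sin (θ x)) / h
  have hg : Continuous g := by fun_prop
  have hg_odd : Function.Odd g := fun x ↦ by
    simp only [g, hθ_odd x, hW_even x, cos_neg, sin_neg]
    ring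
  let ρ : ℝ → ℝ := fun x ↦ exp (∫ t in (0 : ℝ)..x, g t)
  have hρ (x : ℝ) : HasDerivAt ρ (ρ x * g x) x :=
    (intervalIntegral.integral_hasDerivAt_right (hg.intervalIntegrable _ _)
      (hg.stronglyMeasurableAtFilter _ _) hg.continuousAt).exp
  have hρ_even : Function.Even ρ := fun x ↦
    congrArg exp (even_intervalIntegral_of_odd hg_odd x)
  refine ⟨fun x ↦ ρ x * cos (θ x), fun x ↦ ρ x * sin (θ x), ⟨fun x ↦ ?_, fun x ↦ ?_⟩,
    fun x ↦ by simp [hρ_even x, hθ_odd x], fun x ↦ by simp [hρ_even x, hθ_odd x],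
    by simp [ρ, hθ.map_zero], fun x hx ↦ by simp [hx]⟩
  · refine ((hρ x).mul (hθ.hasDerivAt x).cos).congr_deriv ?_
    simp only [prueferField, g]
    linear_combination (ρ x * sin (θ x) / h) * sin_sq_add_cos_sq (θ x)
  · refine ((hρ x).mul (hθ.hasDerivAt x).sin).congr_deriv ?_
    simp only [prueferField, g]
    linear_combination (ρ x * W x * cos (θ x) / h) * sin_sq_add_cos_sq (θ x)

lemma dist_le_gronwallBound {W₁ W₂ θ₁ θ₂ : ℝ → ℝ} (hθ₁ : IsPrueferAngle h W₁ θ₁)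
    (hθ₂ : IsPrueferAngle h W₂ θ₂) {b δ : ℝ} {M : ℝ≥0} (hb : 0 ≤ b)
    (hM : ∀ x ∈ Icc 0 b, |W₂ x| ≤ M) (hδ : ∀ x ∈ Icc 0 b, |W₁ x - W₂ x| ≤ δ) :
    dist (θ₁ b) (θ₂ b) ≤ gronwallBound 0 ((M + 1) * 2 / ‖h‖₊ : ℝ≥0) (δ / |h|) b := by
  have hfield : ∀ x ∈ Ico 0 b,
      dist (prueferField h W₁ x (θ₁ x)) (prueferField h W₂ x (θ₁ x)) ≤ δ / |h| := by
    intro x hx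
    have hsub : prueferField h W₁ x (θ₁ x) - prueferField h W₂ x (θ₁ x) =
        (W₁ x - W₂ x) * cos (θ₁ x) ^ 2 / h := by
      unfold prueferField
      ring
    rw [Real.dist_eq, hsub, abs_div, abs_mul, abs_of_nonneg (sq_nonneg (cos (θ₁ x)))]
    gcongr
    exact (mul_le_of_le_one_right (abs_nonneg _) (cos_sq_le_one _)).trans
      (hδ x (Ico_subset_Icc_self hx))
  simpa using dist_le_of_approx_trajectories_ODE_of_mem (s := fun _ ↦ univ) (δ := 0) (εg := 0)
    (fun x hx ↦ (lipschitzWith_prueferField (hM x (Ico_subset_Icc_self hx))).lipschitzOnWith)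
    hθ₁.continuous.continuousOn (fun x _ ↦ (hθ₁.hasDerivAt x).hasDerivWithinAt) hfield
    (fun _ _ ↦ trivial)
    hθ₂.continuous.continuousOn (fun x _ ↦ (hθ₂.hasDerivAt x).hasDerivWithinAt)
    (fun _ _ ↦ (dist_self _).le) (fun _ _ ↦ trivial)
    (by rw [hθ₁.map_zero, hθ₂.map_zero, dist_self]) b (right_mem_Icc.2 hb)

lemma continuous_of_sub_const {Θ : ℝ → ℝ → ℝ} (hW : Continuous W)
    (hΘ : ∀ ε, IsPrueferAngle h (fun x ↦ W x - ε) (Θ ε)) {b : ℝ} (hb : 0 ≤ b) :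
    Continuous fun ε ↦ Θ ε b := by
  refine continuous_iff_continuousAt.2 fun ε₀ ↦ tendsto_iff_dist_tendsto_zero.2 ?_
  obtain ⟨M, hM⟩ :=
    exists_forall_abs_le_of_continuous (W := fun x ↦ W x - ε₀) (by fun_prop) 0 b
  let B : ℝ → ℝ := fun ε ↦ gronwallBound 0 ((M + 1) * 2 / ‖h‖₊ : ℝ≥0) (|ε - ε₀| / |h|) b
  have hB : Filter.Tendsto B (𝓝 ε₀) (𝓝 0) := by
    have hB_cont : Continuous B := (gronwallBound_continuous_ε 0 _ b).comp (by fun_prop)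
    simpa [B, gronwallBound_ε0_δ0] using hB_cont.tendsto ε₀
  refine squeeze_zero (fun _ ↦ dist_nonneg) (fun ε ↦ ?_) hB
  exact (hΘ ε).dist_le_gronwallBound (hΘ ε₀) hb hM fun x _ ↦ by
    rw [sub_sub_sub_cancel_left, abs_sub_comm]

lemma nonneg_of_nonneg (hθ : IsPrueferAngle h W θ) (hh : 0 < h) (hW : Continuous W) {a : ℝ}
    (ha : 0 ≤ a) (hW_nonneg : ∀ x ∈ Icc 0 a, 0 ≤ W x) : 0 ≤ θ a := by
  obtain ⟨K, hK⟩ := exists_lipschitzWith_prueferField (h := h) hW 0 a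
  refine image_le_image_of_deriv_le_of_le_deriv (α := fun _ ↦ 0) (α' := fun _ ↦ 0) hK
    (fun x _ ↦ hasDerivAt_const x 0) (fun x _ ↦ hθ.hasDerivAt x) (fun x hx ↦ ?_)
    (fun _ _ ↦ le_rfl) hθ.map_zero.ge (right_mem_Icc.2 ha)
  simpa [prueferField] using div_nonneg (hW_nonneg x hx) hh.le

lemma le_neg_div_of_le_neg_one (hθ : IsPrueferAngle h W θ) (hh : 0 < h) {a : ℝ} (ha : 0 ≤ a)
    (hW : ∀ x ∈ Icc 0 a, W x ≤ -1) : θ a ≤ -a / h := by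
  have := image_sub_le_mul_sub_of_hasDerivAt_le (C := -1 / h) ha (fun x _ ↦ hθ.hasDerivAt x) (by
    intro x hx
    rw [prueferField_eq]
    gcongr
    have := mul_nonpos_of_nonpos_of_nonneg (by linarith [hW x hx] : W x + 1 ≤ 0)
      (sq_nonneg (cos (θ x)))
    linarith)
  rw [hθ.map_zero, sub_zero, sub_zero] at this
  exact this.trans_eq (by ring)

lemma add_pi_le_of_add_pi_le {W₁ W₂ θ₁ θ₂ : ℝ → ℝ} (hθ₁ : IsPrueferAngle h W₁ θ₁)
    (hθ₂ : IsPrueferAngle h W₂ θ₂) (hh : 0 < h) (hW₂ : Continuous W₂) {a b : ℝ} (hab : a ≤ b)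
    (hW : ∀ x ∈ Icc a b, W₁ x ≤ W₂ x) (ha : θ₁ a + π ≤ θ₂ a) : θ₁ b + π ≤ θ₂ b := by
  obtain ⟨K, hK⟩ := exists_lipschitzWith_prueferField (h := h) hW₂ a b
  refine image_le_image_of_deriv_le_of_le_deriv (α := fun x ↦ θ₁ x + π) hK
    (fun x _ ↦ (hθ₁.hasDerivAt x).add_const π) (fun x _ ↦ hθ₂.hasDerivAt x) (fun x hx ↦ ?_)
    (fun _ _ ↦ le_rfl) ha (right_mem_Icc.2 hab)
  simp only [prueferField, cos_add_pi, sin_add_pi, neg_sq]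
  gcongr
  exact hW x hx

end IsPrueferAngle

theorem exists_sub_const_isPrueferAngle_cos_eq_zero (hh : 0 < h) (hW : Continuous W) {m b : ℝ}
    (hm : ∀ x ∈ Icc 0 (π * h), |W x| ≤ m) (hb : π * h ≤ b) :
    ∃ ε θ, |ε| ≤ m + 1 ∧ IsPrueferAngle h (fun x ↦ W x - ε) θ ∧ cos (θ b) = 0 := by
  have hW_sub (ε : ℝ) : Continuous fun x ↦ W x - ε := by fun_prop
  choose Θ hΘ using fun ε ↦ exists_isPrueferAngle h (hW_sub ε)
  have hm₀ : 0 ≤ m := (abs_nonneg _).trans (hm 0 (left_mem_Icc.2 (by positivity)))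
  have hlow : 0 ≤ Θ (-m) (π * h) :=
    (hΘ (-m)).nonneg_of_nonneg hh (hW_sub _) (by positivity) fun x hx ↦ by
      linarith [neg_le_of_abs_le (hm x hx)]
  have hhigh : Θ (m + 1) (π * h) ≤ -π :=
    ((hΘ (m + 1)).le_neg_div_of_le_neg_one hh (by positivity) fun x hx ↦ by
      linarith [le_of_abs_le (hm x hx)]).trans_eq (by field_simp)
  have hgap : Θ (m + 1) b + π ≤ Θ (-m) b :=
    (hΘ _).add_pi_le_of_add_pi_le (hΘ _) hh (hW_sub _) hb (fun x _ ↦ by linarith) (by linarith)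
  obtain ⟨y, hy, hcos⟩ := exists_cos_eq_zero_of_add_pi_le hgap
  have hcont := IsPrueferAngle.continuous_of_sub_const hW hΘ ((by positivity : 0 ≤ π * h).trans hb)
  obtain ⟨ε, hε, rfl⟩ :=
    intermediate_value_Icc' (by linarith : -m ≤ m + 1) hcont.continuousOn hy
  exact ⟨ε, Θ ε, abs_le.2 ⟨by linarith [hε.1], hε.2⟩, hΘ ε, hcos⟩

end Pruefer

theorem exists_even_schrodingerSolution_eq_zero {V : ℝ → ℝ} (hV : ContDiff ℝ 2 V)
    (hV_even : Function.Even V) {b : ℝ} (hb : 0 < b) :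
    ∃ A > 0, ∀ h, 0 < h → π * √h ≤ b → ∃ E u p, |E - V 0| ≤ A * h ∧
      SchrodingerSolution h (fun x ↦ V x - E) u p ∧ Function.Even u ∧ Function.Odd p ∧
      u 0 = 1 ∧ u b = 0 := by
  obtain ⟨C, hC⟩ := exists_abs_sub_le_mul_sq_of_even hV hV_even hb
  have hC₀ : 0 ≤ C := nonneg_of_mul_nonneg_left
    ((abs_nonneg _).trans (hC b (right_mem_Icc.2 hb.le))) (by positivity)
  refine ⟨C * π ^ 2 + 1, by positivity, fun h hh hhb ↦ ?_⟩
  -- The well has width of order `√h`, so the Prüfer equation is used with the semiclassical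
  -- parameter `√h` and the potential `(V - V 0) / h`, bounded uniformly in `h` for `|x| ≤ π √h`.
  have hsq : √h ^ 2 = h := Real.sq_sqrt hh.le
  have hW : Continuous fun x ↦ (V x - V 0) / h := by
    have := hV.continuous
    fun_prop
  have hW_le : ∀ x ∈ Icc 0 (π * √h), |(V x - V 0) / h| ≤ C * π ^ 2 := by
    intro x hx
    rw [abs_div, abs_of_pos hh, div_le_iff₀ hh]
    calc |V x - V 0| ≤ C * x ^ 2 := hC x ⟨hx.1, hx.2.trans hhb⟩
      _ ≤ C * (π * √h) ^ 2 := by gcongr; exacts [hx.1, hx.2]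
      _ = C * π ^ 2 * h := by rw [mul_pow, hsq]; ring
  obtain ⟨ε, θ, hε, hθ, hcos⟩ :=
    exists_sub_const_isPrueferAngle_cos_eq_zero (Real.sqrt_pos.2 hh) hW hW_le hhb
  obtain ⟨u, p, hs, hu, hp, hu₀, hub⟩ := hθ.exists_schrodingerSolution
    (by fun_prop) (fun x ↦ by rw [hV_even x])
  refine ⟨V 0 + h * ε, u, fun x ↦ √h * p x, ?_, ?_, hu, fun x ↦ by simp [hp x], hu₀,
    hub b hcos⟩
  · rw [add_sub_cancel_left, abs_mul, abs_of_pos hh, mul_comm]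
    gcongr
  · convert hs.rescale (Real.sqrt_ne_zero'.2 hh) using 1
    · exact (Real.mul_self_sqrt hh.le).symm
    · funext x
      rw [hsq]
      field_simp
      ring


namespace SchrodingerSolution

variable {h κ : ℝ} {W u p : ℝ → ℝ} {a b c d : ℝ}

lemma hasDerivAt_sq (hs : SchrodingerSolution h W u p) (x : ℝ) :
    HasDerivAt (fun x ↦ u x ^ 2) (2 * (u x * p x) / h) x :=
  ((hs.hasDerivAt x).pow 2).congr_deriv (by push_cast; ring)

lemma hasDerivAt_momentum_sq (hs : SchrodingerSolution h W u p) (x : ℝ) :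
    HasDerivAt (fun x ↦ p x ^ 2) (2 * W x * (u x * p x) / h) x :=
  ((hs.hasDerivAt_momentum x).pow 2).congr_deriv (by push_cast; ring)

lemma hasDerivAt_neg_mul (hs : SchrodingerSolution h W u p) (x : ℝ) :
    HasDerivAt (fun x ↦ -(u x * p x)) (-(p x ^ 2 + W x * u x ^ 2) / h) x :=
  ((hs.hasDerivAt x).mul (hs.hasDerivAt_momentum x)).neg.congr_deriv (by ring)

lemma antitoneOn_neg_mul (hs : SchrodingerSolution h W u p) (hh : 0 < h)
    (hW : ∀ x ∈ Icc a b, 0 ≤ W x) : AntitoneOn (fun x ↦ -(u x * p x)) (Icc a b) := by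
  intro x hx y hy hxy
  have := image_sub_le_mul_sub_of_hasDerivAt_le (C := 0) hxy
    (fun t _ ↦ hs.hasDerivAt_neg_mul t) (fun t ht ↦ by
      have := hW t ⟨hx.1.trans ht.1, ht.2.trans hy.2⟩
      exact div_nonpos_of_nonpos_of_nonneg (neg_nonpos.2 (by positivity)) hh.le)
  linarith

lemma neg_mul_nonneg (hs : SchrodingerSolution h W u p) (hh : 0 < h)
    (hW : ∀ x ∈ Icc a b, 0 ≤ W x) (hub : u b = 0) {x : ℝ} (hx : x ∈ Icc a b) :
    0 ≤ -(u x * p x) := by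
  simpa [hub] using hs.antitoneOn_neg_mul hh hW hx (right_mem_Icc.2 (hx.1.trans hx.2)) hx.2

lemma momentum_sq_le (hs : SchrodingerSolution h W u p) (hh : 0 < h)
    (hW : ∀ x ∈ Icc a b, 0 ≤ W x) (hub : u b = 0) {x : ℝ} (hx : x ∈ Icc a b) :
    p b ^ 2 ≤ p x ^ 2 := by
  have := image_sub_le_mul_sub_of_hasDerivAt_le (C := 0) hx.2
    (fun t _ ↦ hs.hasDerivAt_momentum_sq t) (fun t ht ↦ by
      have ht' : t ∈ Icc a b := ⟨hx.1.trans ht.1, ht.2⟩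
      have := mul_nonneg (hW t ht') (hs.neg_mul_nonneg hh hW hub ht')
      exact div_nonpos_of_nonpos_of_nonneg (by linarith) hh.le)
  linarith

lemma momentum_sq_mul_div_le_neg_mul (hs : SchrodingerSolution h W u p) (hh : 0 < h)
    (hW : ∀ x ∈ Icc a b, 0 ≤ W x) (hub : u b = 0) {x : ℝ} (hx : x ∈ Icc a b) :
    p b ^ 2 / h * (b - x) ≤ -(u x * p x) := by
  have := image_sub_le_mul_sub_of_hasDerivAt_le (C := -(p b ^ 2 / h)) hx.2
    (fun t _ ↦ hs.hasDerivAt_neg_mul t) (fun t ht ↦ by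
      have ht' : t ∈ Icc a b := ⟨hx.1.trans ht.1, ht.2⟩
      have := hs.momentum_sq_le hh hW hub ht'
      have := mul_nonneg (hW t ht') (sq_nonneg (u t))
      rw [neg_div]
      gcongr
      linarith)
  rw [hub] at this
  linarith

lemma neg_mul_le_mul_exp (hs : SchrodingerSolution h W u p) (hh : 0 < h) (hcd : c ≤ d)
    (hW : ∀ x ∈ Icc c d, κ ^ 2 ≤ W x) :
    -(u d * p d) ≤ -(u c * p c) * exp (-(2 * κ / h) * (d - c)) :=
  le_mul_exp_of_hasDerivAt_le_mul hcd (fun x _ ↦ hs.hasDerivAt_neg_mul x) fun x hx ↦ by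
    have hWu : κ ^ 2 * u x ^ 2 ≤ W x * u x ^ 2 := by gcongr; exact hW x hx
    have hamgm : -(p x ^ 2 + W x * u x ^ 2) ≤ -(2 * κ * -(u x * p x)) := by
      linarith [sq_nonneg (p x + κ * u x)]
    calc -(p x ^ 2 + W x * u x ^ 2) / h ≤ -(2 * κ * -(u x * p x)) / h := by gcongr
      _ = -(2 * κ / h) * -(u x * p x) := by ring

lemma neg_mul_mul_sub_le_sq (hs : SchrodingerSolution h W u p) (hh : 0 < h)
    (hW : ∀ x ∈ Icc a c, 0 ≤ W x) {x : ℝ} (hx : x ∈ Icc a c) :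
    2 * -(u c * p c) / h * (c - x) ≤ u x ^ 2 := by
  have := image_sub_le_mul_sub_of_hasDerivAt_le (C := -(2 * -(u c * p c) / h)) hx.2
    (fun t _ ↦ hs.hasDerivAt_sq t) (fun t ht ↦ by
      have := hs.antitoneOn_neg_mul hh hW ⟨hx.1.trans ht.1, ht.2⟩
        (right_mem_Icc.2 (hx.1.trans hx.2)) ht.2
      rw [← neg_div]
      gcongr
      linarith)
  linarith [sq_nonneg (u c)]

lemma neg_mul_mul_sub_sq_le_integral_sq (hs : SchrodingerSolution h W u p) (hh : 0 < h)
    (hac : a ≤ c) (hW : ∀ x ∈ Icc a c, 0 ≤ W x) :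
    -(u c * p c) * (c - a) ^ 2 / h ≤ ∫ x in a..c, u x ^ 2 :=
  calc -(u c * p c) * (c - a) ^ 2 / h
      = ∫ x in a..c, 2 * -(u c * p c) / h * (c - x) := by
        rw [intervalIntegral.integral_const_mul,
          intervalIntegral.integral_comp_sub_left (fun x ↦ x), integral_id]
        ring
    _ ≤ ∫ x in a..c, u x ^ 2 :=
      intervalIntegral.integral_mono_on hac
        (Continuous.intervalIntegrable (by fun_prop) _ _)
        ((hs.continuous.pow 2).intervalIntegrable _ _)
        fun _ hx ↦ hs.neg_mul_mul_sub_le_sq hh hW hx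

theorem momentum_sq_mul_exp_le_integral_sq (hs : SchrodingerSolution h W u p) (hh : 0 < h)
    (hac : a ≤ c) (hcd : c ≤ d) (hdb : d ≤ b) (hW : ∀ x ∈ Icc a b, 0 ≤ W x)
    (hWκ : ∀ x ∈ Icc c d, κ ^ 2 ≤ W x) (hub : u b = 0) :
    (b - d) * (c - a) ^ 2 * exp (2 * κ / h * (d - c)) * p b ^ 2 ≤
      h ^ 2 * ∫ x in a..c, u x ^ 2 := by
  have hd := hs.momentum_sq_mul_div_le_neg_mul hh hW hub (x := d) ⟨hac.trans hcd, hdb⟩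
  have hc : -(u d * p d) * exp (2 * κ / h * (d - c)) ≤ -(u c * p c) := by
    rw [← le_div_iff₀ (exp_pos _), div_eq_mul_inv, ← exp_neg, ← neg_mul (2 * κ / h)]
    exact hs.neg_mul_le_mul_exp hh hcd hWκ
  calc (b - d) * (c - a) ^ 2 * exp (2 * κ / h * (d - c)) * p b ^ 2
      = h ^ 2 * (p b ^ 2 / h * (b - d) * exp (2 * κ / h * (d - c)) * (c - a) ^ 2 / h) := by
        field_simp
    _ ≤ h ^ 2 * (-(u d * p d) * exp (2 * κ / h * (d - c)) * (c - a) ^ 2 / h) := by gcongr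
    _ ≤ h ^ 2 * (-(u c * p c) * (c - a) ^ 2 / h) := by gcongr
    _ ≤ h ^ 2 * ∫ x in a..c, u x ^ 2 := by
      gcongr
      exact hs.neg_mul_mul_sub_sq_le_integral_sq hh hac fun x hx ↦
        hW x (Icc_subset_Icc_right (hcd.trans hdb) hx)

lemma momentum_sq_add_le_mul_exp (hs : SchrodingerSolution h W u p) (hh : 0 < h) (hκ : 0 ≤ κ)
    (hcd : c ≤ d) (hW : ∀ x ∈ Icc c d, |W x| ≤ κ ^ 2) :
    p d ^ 2 + κ ^ 2 * u d ^ 2 ≤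
      (p c ^ 2 + κ ^ 2 * u c ^ 2) * exp (2 * κ / h * (d - c)) :=
  le_mul_exp_of_hasDerivAt_le_mul hcd
    (fun x _ ↦ (hs.hasDerivAt_momentum_sq x).add ((hs.hasDerivAt_sq x).const_mul (κ ^ 2)))
    fun x hx ↦ by
      have hWκ : (W x + κ ^ 2) * (u x * p x) ≤ 2 * κ ^ 2 * |u x * p x| := by
        refine (le_abs_self _).trans ?_
        rw [abs_mul]
        gcongr
        exact abs_le.2 ⟨by linarith [neg_le_of_abs_le (hW x hx), sq_nonneg κ],
          by linarith [le_of_abs_le (hW x hx)]⟩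
      have hamgm : 2 * κ * |u x * p x| ≤ p x ^ 2 + κ ^ 2 * u x ^ 2 := by
        rw [abs_mul, ← sq_abs (p x), ← sq_abs (u x)]
        linarith [sq_nonneg (|p x| - κ * |u x|)]
      calc 2 * W x * (u x * p x) / h + κ ^ 2 * (2 * (u x * p x) / h)
          = 2 / h * ((W x + κ ^ 2) * (u x * p x)) := by ring
        _ ≤ 2 / h * (2 * κ ^ 2 * |u x * p x|) := by gcongr
        _ = 2 * κ / h * (2 * κ * |u x * p x|) := by ring
        _ ≤ 2 * κ / h * (p x ^ 2 + κ ^ 2 * u x ^ 2) := by gcongr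

lemma sq_add_momentum_sq_le_mul_exp {W' : ℝ → ℝ} {μ D : ℝ} (hs : SchrodingerSolution h W u p)
    (hcd : c ≤ d) (hμ : 0 < μ) (hWμ : ∀ x ∈ Icc c d, W x ≤ -μ)
    (hW' : ∀ x ∈ Icc c d, HasDerivAt W (W' x) x) (hD : ∀ x ∈ Icc c d, |W' x| ≤ D) :
    u d ^ 2 + p d ^ 2 ≤
      (1 + 1 / μ) * ((p c ^ 2 - W c * u c ^ 2) * exp (D / μ * (d - c))) := by
  have hu_le : ∀ x ∈ Icc c d, u x ^ 2 ≤ 1 / μ * (p x ^ 2 - W x * u x ^ 2) := fun x hx ↦ by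
    have : μ * u x ^ 2 ≤ -W x * u x ^ 2 := by gcongr; linarith [hWμ x hx]
    rw [one_div, inv_mul_eq_div, le_div_iff₀ hμ]
    linarith [sq_nonneg (p x)]
  have henergy : p d ^ 2 - W d * u d ^ 2 ≤
      (p c ^ 2 - W c * u c ^ 2) * exp (D / μ * (d - c)) := by
    -- The energy `p² - W u²` has derivative `-W' u²`, without a factor `1 / h`.
    refine le_mul_exp_of_hasDerivAt_le_mul hcd (f' := fun x ↦ -W' x * u x ^ 2)
      (fun x hx ↦ ((hs.hasDerivAt_momentum_sq x).sub ((hW' x hx).mul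
        (hs.hasDerivAt_sq x))).congr_deriv (by ring)) fun x hx ↦ ?_
    have hD₀ : 0 ≤ D := (abs_nonneg _).trans (hD x hx)
    calc -W' x * u x ^ 2 ≤ D * u x ^ 2 := by gcongr; linarith [neg_le_of_abs_le (hD x hx)]
      _ ≤ D * (1 / μ * (p x ^ 2 - W x * u x ^ 2)) := by gcongr; exact hu_le x hx
      _ = D / μ * (p x ^ 2 - W x * u x ^ 2) := by ring
  have hd := right_mem_Icc.2 hcd
  have hp_le : p d ^ 2 ≤ p d ^ 2 - W d * u d ^ 2 := by
    have := mul_nonneg (by linarith [hWμ d hd] : 0 ≤ -W d) (sq_nonneg (u d))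
    linarith
  calc u d ^ 2 + p d ^ 2 ≤ (1 + 1 / μ) * (p d ^ 2 - W d * u d ^ 2) := by
        linarith [hu_le d hd]
    _ ≤ _ := by gcongr

end SchrodingerSolution

/-- A potential `W` seen by tunnelling through the barrier `[a, b₁]`: it is nonnegative there with
`W ≥ κ²` on `[c, d]`, small on the window `[b₁, b₂]` around the turning point, and negative on
`[b₂, R]`. The window is short enough that the exponent of the growth across it is at most half of
the exponent of the decay on `[c, d]`. -/
structure IsTunnelingBarrier (W : ℝ → ℝ) (a c d b₁ b₂ R κ μ D : ℝ) : Prop where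
  left_lt : a < c
  lt_mid : c < d
  lt_right : d < b₁
  right_lt : b₁ < b₂
  window_le : 2 * (b₂ - b₁) ≤ d - c
  height_pos : 0 < κ
  depth_pos : 0 < μ
  nonneg : ∀ x ∈ Icc a b₁, 0 ≤ W x
  sq_le : ∀ x ∈ Icc c d, κ ^ 2 ≤ W x
  abs_le_sq : ∀ x ∈ Icc b₁ b₂, |W x| ≤ κ ^ 2
  le_neg : ∀ x ∈ Icc b₂ R, W x ≤ -μ
  differentiable : Differentiable ℝ W
  abs_deriv_le : ∀ x ∈ Icc b₂ R, |deriv W x| ≤ D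

namespace IsTunnelingBarrier

variable {W : ℝ → ℝ} {a c d b₁ b₂ R κ μ D : ℝ}

lemma energy_mul_exp_le (hB : IsTunnelingBarrier W a c d b₁ b₂ R κ μ D) {h : ℝ} (hh : 0 < h)
    {u p : ℝ → ℝ} (hs : SchrodingerSolution h W u p) (hub : u b₁ = 0) :
    (b₁ - d) * (c - a) ^ 2 * exp (κ / h * (d - c)) * (p b₂ ^ 2 - W b₂ * u b₂ ^ 2) ≤
      h ^ 2 * ∫ x in a..c, u x ^ 2 := by
  have hd := sub_nonneg.2 hB.lt_right.le
  have hwindow : p b₂ ^ 2 - W b₂ * u b₂ ^ 2 ≤ exp (κ / h * (d - c)) * p b₁ ^ 2 :=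
    calc p b₂ ^ 2 - W b₂ * u b₂ ^ 2 = p b₂ ^ 2 + -W b₂ * u b₂ ^ 2 := by ring
      _ ≤ p b₂ ^ 2 + κ ^ 2 * u b₂ ^ 2 := by
        gcongr
        exact neg_le.1 (neg_le_of_abs_le (hB.abs_le_sq b₂ (right_mem_Icc.2 hB.right_lt.le)))
      _ ≤ (p b₁ ^ 2 + κ ^ 2 * u b₁ ^ 2) * exp (2 * κ / h * (b₂ - b₁)) :=
        hs.momentum_sq_add_le_mul_exp hh hB.height_pos.le hB.right_lt.le hB.abs_le_sq
      _ = exp (κ / h * (2 * (b₂ - b₁))) * p b₁ ^ 2 := by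
        rw [hub, show 2 * κ / h * (b₂ - b₁) = κ / h * (2 * (b₂ - b₁)) by ring]
        ring
      _ ≤ exp (κ / h * (d - c)) * p b₁ ^ 2 := by
        have := hB.height_pos
        gcongr
        exact hB.window_le
  calc (b₁ - d) * (c - a) ^ 2 * exp (κ / h * (d - c)) * (p b₂ ^ 2 - W b₂ * u b₂ ^ 2)
      ≤ (b₁ - d) * (c - a) ^ 2 * exp (κ / h * (d - c)) * (exp (κ / h * (d - c)) * p b₁ ^ 2) := by
        gcongr
    _ = (b₁ - d) * (c - a) ^ 2 * exp (2 * κ / h * (d - c)) * p b₁ ^ 2 := by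
      rw [show 2 * κ / h * (d - c) = κ / h * (d - c) + κ / h * (d - c) by ring, exp_add]
      ring
    _ ≤ h ^ 2 * ∫ x in a..c, u x ^ 2 :=
      hs.momentum_sq_mul_exp_le_integral_sq hh hB.left_lt.le hB.lt_mid.le hB.lt_right.le hB.nonneg
        hB.sq_le hub

theorem sq_add_momentum_sq_le (hB : IsTunnelingBarrier W a c d b₁ b₂ R κ μ D) {h : ℝ}
    (hh : 0 < h) {u p : ℝ → ℝ} (hs : SchrodingerSolution h W u p) (hub : u b₁ = 0) {x : ℝ}
    (hx : x ∈ Icc b₂ R) :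
    u x ^ 2 + p x ^ 2 ≤ (1 + 1 / μ) * exp (D / μ * (R - b₂)) / ((b₁ - d) * (c - a) ^ 2) *
      exp (-(κ * (d - c)) / h) * (h ^ 2 * ∫ x in a..c, u x ^ 2) := by
  have hμ := hB.depth_pos
  have hsub : Icc b₂ x ⊆ Icc b₂ R := Icc_subset_Icc_right hx.2
  have hD : 0 ≤ D := (abs_nonneg _).trans (hB.abs_deriv_le x hx)
  have hbd : 0 < (b₁ - d) * (c - a) ^ 2 :=
    mul_pos (sub_pos.2 hB.lt_right) (pow_pos (sub_pos.2 hB.left_lt) 2)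
  have henergy : p b₂ ^ 2 - W b₂ * u b₂ ^ 2 ≤ (h ^ 2 * ∫ x in a..c, u x ^ 2) /
      ((b₁ - d) * (c - a) ^ 2 * exp (κ / h * (d - c))) :=
    (le_div_iff₀' (by positivity)).2 (hB.energy_mul_exp_le hh hs hub)
  have henergy_nonneg : 0 ≤ p b₂ ^ 2 - W b₂ * u b₂ ^ 2 := by
    have hW := hB.le_neg b₂ (left_mem_Icc.2 (hx.1.trans hx.2))
    have := mul_nonneg (by linarith : 0 ≤ -W b₂) (sq_nonneg (u b₂))
    linarith [sq_nonneg (p b₂)]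
  calc u x ^ 2 + p x ^ 2
      ≤ (1 + 1 / μ) * ((p b₂ ^ 2 - W b₂ * u b₂ ^ 2) * exp (D / μ * (x - b₂))) :=
        hs.sq_add_momentum_sq_le_mul_exp hx.1 hμ (fun t ht ↦ hB.le_neg t (hsub ht))
          (fun t _ ↦ (hB.differentiable t).hasDerivAt) fun t ht ↦ hB.abs_deriv_le t (hsub ht)
    _ ≤ (1 + 1 / μ) * ((h ^ 2 * ∫ x in a..c, u x ^ 2) /
          ((b₁ - d) * (c - a) ^ 2 * exp (κ / h * (d - c))) * exp (D / μ * (R - b₂))) := by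
        gcongr
        exacts [henergy_nonneg.trans henergy, hx.2]
    _ = _ := by
      rw [show -(κ * (d - c)) / h = -(κ / h * (d - c)) by ring, exp_neg]
      field_simp

end IsTunnelingBarrier

section Barrier

variable {V : ℝ → ℝ} {E a b L r R : ℝ}

lemma eq_of_forall_lt_of_forall_gt (hV : Continuous V) (hab : a < b) (hbR : b < R)
    (hV_gt : ∀ x ∈ Ioo a b, E < V x) (hV_lt : ∀ x ∈ Ioc b R, V x < E) : V b = E := by
  refine le_antisymm ?_ ?_
  · refine le_on_closure (fun x hx ↦ (hV_lt x hx).le) hV.continuousOn continuousOn_const ?_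
    rw [closure_Ioc hbR.ne]
    exact left_mem_Icc.2 hbR.le
  · refine le_on_closure (fun x hx ↦ (hV_gt x hx).le) continuousOn_const hV.continuousOn ?_
    rw [closure_Ioo hab.ne]
    exact right_mem_Icc.2 hab.le

lemma exists_isTunnelingBarrier_of_add_two_mul_sq_le {c d κ : ℝ} (hV : ContDiff ℝ 1 V)
    (hac : a < c) (hcd : c < d) (hdb : d < b) (hbr : b < r) (hκ : 0 < κ)
    (hV_gt : ∀ x ∈ Ico a b, E < V x) (hV_ge : ∀ x ∈ Icc c d, E + 2 * κ ^ 2 ≤ V x)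
    (hVb : V b = E) (hV_lt : ∀ x ∈ Ioc b R, V x < E) :
    ∃ b₁ b₂ μ D, b₂ < r ∧ ∃ ε > 0, ∀ E', |E' - E| ≤ ε →
      IsTunnelingBarrier (fun x ↦ V x - E') a c d b₁ b₂ R κ μ D := by
  have hκ_sq : 0 < κ ^ 2 / 2 := by positivity
  obtain ⟨δ, hδ₀, hδ⟩ := Metric.nhds_basis_closedBall.eventually_iff.1
    (hV.continuous.continuousAt.eventually (Metric.closedBall_mem_nhds (V b) hκ_sq))
  obtain ⟨η, hη₀, hη⟩ := exists_between
    (lt_min hδ₀ (lt_min (sub_pos.2 hdb) (lt_min (sub_pos.2 hbr)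
      (by linarith : 0 < (d - c) / 4))))
  simp only [lt_min_iff] at hη
  obtain ⟨hηδ, hηd, hηr, hηcd⟩ := hη
  obtain ⟨v₁, hEv₁, hv₁⟩ := isCompact_Icc.exists_forall_le' (s := Icc a (b - η))
    hV.continuous.continuousOn fun x hx ↦ hV_gt x ⟨hx.1, by linarith [hx.2]⟩
  obtain ⟨v₂, hEv₂, hv₂⟩ := isCompact_Icc.exists_forall_le' (s := Icc (b + η) R) (a := -E)
    (f := fun x ↦ -V x) hV.continuous.neg.continuousOn
    fun x hx ↦ neg_lt_neg (hV_lt x ⟨by linarith [hx.1], hx.2⟩)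
  obtain ⟨D, hD⟩ := exists_forall_abs_le_of_continuous (hV.continuous_deriv le_rfl) (b + η) R
  refine ⟨b - η, b + η, (v₂ + E) / 2, D, by linarith,
    min (κ ^ 2 / 2) (min (v₁ - E) ((v₂ + E) / 2)),
    lt_min hκ_sq (lt_min (by linarith) (by linarith)), fun E' hE' ↦ ?_⟩
  simp only [le_min_iff, abs_le] at hE'
  obtain ⟨hE'_window, hE'_barrier, hE'_outer⟩ := hE'
  refine ⟨hac, hcd, by linarith, by linarith, by linarith, hκ, by linarith,
    fun x hx ↦ by linarith [hv₁ x hx], fun x hx ↦ by linarith [hV_ge x hx], fun x hx ↦ ?_,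
    fun x hx ↦ by linarith [hv₂ x hx], (hV.differentiable one_ne_zero).sub_const E',
    fun x hx ↦ by simpa using hD x hx⟩
  have hVx : |V x - V b| ≤ κ ^ 2 / 2 := hδ (Metric.mem_closedBall.2
    (abs_le.2 ⟨by linarith [hx.1], by linarith [hx.2]⟩))
  rw [hVb, abs_le] at hVx
  exact abs_le.2 ⟨by linarith, by linarith⟩

theorem exists_isTunnelingBarrier (hV : ContDiff ℝ 1 V) (hab : a < b) (haL : a < L)
    (hbr : b < r) (hbR : b < R) (hV_gt : ∀ x ∈ Ioo a b, E < V x)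
    (hV_lt : ∀ x ∈ Ioc b R, V x < E) :
    ∃ a' c d b₁ b₂ κ μ D, a < a' ∧ c < L ∧ b₂ < r ∧ ∃ ε > 0, ∀ E', |E' - E| ≤ ε →
      IsTunnelingBarrier (fun x ↦ V x - E') a' c d b₁ b₂ R κ μ D := by
  have hVb := eq_of_forall_lt_of_forall_gt hV.continuous hab hbR hV_gt hV_lt
  obtain ⟨a', haa', ha'm⟩ := exists_between (lt_min hab haL)
  obtain ⟨c, ha'c, hcm⟩ := exists_between ha'm
  obtain ⟨d, hcd, hdm⟩ := exists_between hcm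
  obtain ⟨v, hEv, hv⟩ := isCompact_Icc.exists_forall_le' (s := Icc c d) hV.continuous.continuousOn
    fun x hx ↦ hV_gt x ⟨by linarith [hx.1], by linarith [hx.2, min_le_left b L]⟩
  have hκ : √((v - E) / 2) ^ 2 = (v - E) / 2 := Real.sq_sqrt (by linarith)
  obtain ⟨b₁, b₂, μ, D, hb₂r, hB⟩ := exists_isTunnelingBarrier_of_add_two_mul_sq_le hV ha'c hcd
    (hdm.trans_le (min_le_left b L)) hbr (Real.sqrt_pos.2 (by linarith : 0 < (v - E) / 2))
    (fun x hx ↦ hV_gt x ⟨haa'.trans_le hx.1, hx.2⟩) (fun x hx ↦ by linarith [hv x hx]) hVb hV_lt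
  exact ⟨a', c, d, b₁, b₂, _, μ, D, haa', hcm.trans_le (min_le_right b L), hb₂r, hB⟩

end Barrier

section Norms

variable {u : ℝ → ℝ} {a b : ℝ}

lemma l2Norm_Ioo (hab : a ≤ b) (u : ℝ → ℝ) :
    l2Norm (Ioo a b) u = √(∫ x in a..b, u x ^ 2) := by
  simp only [l2Norm, norm_eq_abs, sq_abs, intervalIntegral.integral_of_le hab,
    integral_Ioc_eq_integral_Ioo]

lemma l2Norm_div_const (I : Set ℝ) (u : ℝ → ℝ) (N : ℝ) :
    l2Norm I (fun x ↦ u x / N) = l2Norm I u / |N| := by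
  simp only [l2Norm, norm_div, div_pow, integral_div]
  rw [Real.sqrt_div' _ (by positivity), Real.sqrt_sq (norm_nonneg N), norm_eq_abs]

lemma l2Norm_Ioo_pos (hu : Continuous u) {x : ℝ} (hx : x ∈ Ioo a b) (hux : u x ≠ 0) :
    0 < l2Norm (Ioo a b) u := by
  have hab := hx.1.trans hx.2
  rw [l2Norm_Ioo hab.le]
  exact Real.sqrt_pos.2 (intervalIntegral.integral_pos hab (hu.pow 2).continuousOn
    (fun _ _ ↦ sq_nonneg _) ⟨x, Ioo_subset_Icc_self hx, by positivity⟩)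

lemma integral_sq_le_sq_l2Norm_Ioo (hu : Continuous u) {c d : ℝ} (hac : a ≤ c) (hcd : c ≤ d)
    (hdb : d ≤ b) : ∫ x in c..d, u x ^ 2 ≤ l2Norm (Ioo a b) u ^ 2 := by
  have hab := hac.trans (hcd.trans hdb)
  rw [l2Norm_Ioo hab, Real.sq_sqrt
    (intervalIntegral.integral_nonneg hab fun _ _ ↦ sq_nonneg _)]
  exact intervalIntegral.integral_mono_interval hac hcd hdb
    (Filter.Eventually.of_forall fun _ ↦ sq_nonneg _) ((hu.pow 2).intervalIntegrable _ _)

lemma h1Norm_le_sqrt {h B : ℝ} {I : Set ℝ} {u' : ℝ → ℝ} (hI : volume I < ⊤)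
    (hB : ∀ x ∈ I, u x ^ 2 + (h * u' x) ^ 2 ≤ B) :
    h1Norm h I u u' ≤ √(2 * B * volume.real I) := by
  have hu := norm_setIntegral_le_of_norm_le_const (f := fun x ↦ ‖u x‖ ^ 2) (C := B) hI
    fun x hx ↦ by
      rw [norm_pow, norm_norm, norm_eq_abs, sq_abs]
      linarith [hB x hx, sq_nonneg (h * u' x)]
  have hu' := norm_setIntegral_le_of_norm_le_const (f := fun x ↦ ‖h * u' x‖ ^ 2) (C := B) hI
    fun x hx ↦ by
      rw [norm_pow, norm_norm, norm_eq_abs, sq_abs]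
      linarith [hB x hx, sq_nonneg (u x)]
  exact Real.sqrt_le_sqrt (by linarith [le_of_abs_le hu, le_of_abs_le hu'])

lemma volume_abs_annulus_lt_top (r R : ℝ) : volume {x : ℝ | r < |x| ∧ |x| < R} < ⊤ :=
  (measure_mono fun _ hx ↦ abs_lt.1 hx.2 : _ ≤ volume (Ioo (-R) R)).trans_lt measure_Ioo_lt_top

lemma SchrodingerSolution.h1Norm_abs_annulus_le {h r R B : ℝ} {W p : ℝ → ℝ}
    (hs : SchrodingerSolution h W u p) (hh : h ≠ 0) (hu : Function.Even u) (hp : Function.Odd p)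
    (hB : ∀ x ∈ Icc r R, u x ^ 2 + p x ^ 2 ≤ B) :
    h1Norm h {x | r < |x| ∧ |x| < R} u (deriv u) ≤
      √(2 * B * volume.real {x : ℝ | r < |x| ∧ |x| < R}) := by
  refine h1Norm_le_sqrt (volume_abs_annulus_lt_top r R) fun x hx ↦ ?_
  rw [hs.deriv_eq, mul_div_cancel₀ _ hh]
  obtain ⟨hr, hR⟩ := hx
  rcases abs_choice x with h_abs | h_abs <;> rw [h_abs] at hr hR
  · exact hB x ⟨hr.le, hR.le⟩
  · simpa [hu x, hp x] using hB (-x) ⟨hr.le, hR.le⟩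

end Norms

section Quasimode

variable {V : ℝ → ℝ} {E a b L r R : ℝ}

theorem exists_even_schrodingerSolution_l2Norm_eq_one (hV : ContDiff ℝ 2 V)
    (hV_even : Function.Even V) (hb : 0 < b) (hL : 0 < L) :
    ∃ A > 0, ∀ h, 0 < h → π * √h ≤ b → ∃ E u p, |E - V 0| ≤ A * h ∧
      SchrodingerSolution h (fun x ↦ V x - E) u p ∧ Function.Even u ∧ Function.Odd p ∧
      l2Norm (Ioo (-L) L) u = 1 ∧ u b = 0 := by
  obtain ⟨A, hA, hsol⟩ := exists_even_schrodingerSolution_eq_zero hV hV_even hb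
  refine ⟨A, hA, fun h hh hhb ↦ ?_⟩
  obtain ⟨E, u, p, hE, hs, hu, hp, hu₀, hub⟩ := hsol h hh hhb
  have hN : 0 < l2Norm (Ioo (-L) L) u :=
    l2Norm_Ioo_pos hs.continuous (x := 0) ⟨by linarith, hL⟩ (by simp [hu₀])
  refine ⟨E, _, _, hE, hs.div_const (l2Norm (Ioo (-L) L) u), fun x ↦ by simp [hu x],
    fun x ↦ by simp [hp x, neg_div], ?_, by simp [hub]⟩
  rw [l2Norm_div_const, abs_of_pos hN, div_self hN.ne']

theorem exists_forall_sq_add_momentum_sq_le_l2Norm (hV : ContDiff ℝ 1 V) (ha : 0 ≤ a)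
    (hab : a < b) (haL : a < L) (hbr : b < r) (hbR : b < R) (hV_gt : ∀ x ∈ Ioo a b, E < V x)
    (hV_lt : ∀ x ∈ Ioc b R, V x < E) :
    ∃ b₁ > 0, ∃ K > 0, ∃ γ > 0, ∃ ε > 0, ∀ E', |E' - E| ≤ ε → ∀ h, 0 < h → ∀ u p,
      SchrodingerSolution h (fun x ↦ V x - E') u p → u b₁ = 0 → ∀ x ∈ Icc r R,
        u x ^ 2 + p x ^ 2 ≤ K * exp (-γ / h) * (h * l2Norm (Ioo (-L) L) u) ^ 2 := by
  obtain ⟨a', c, d, b₁, b₂, κ, μ, D, haa', hcL, hb₂r, ε, hε, hB⟩ :=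
    exists_isTunnelingBarrier hV hab haL hbr hbR hV_gt hV_lt
  have hB_E := hB E (by simpa using hε.le)
  have hac := sub_pos.2 hB_E.left_lt
  have hcd := sub_pos.2 hB_E.lt_mid
  have hdb := sub_pos.2 hB_E.lt_right
  have hκ := hB_E.height_pos
  have hμ := hB_E.depth_pos
  refine ⟨b₁, by linarith,
    (1 + 1 / μ) * exp (D / μ * (R - b₂)) / ((b₁ - d) * (c - a') ^ 2), by positivity,
    κ * (d - c), by positivity, ε, hε, fun E' hE' h hh u p hs hub x hx ↦ ?_⟩
  calc u x ^ 2 + p x ^ 2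
      ≤ (1 + 1 / μ) * exp (D / μ * (R - b₂)) / ((b₁ - d) * (c - a') ^ 2) *
          exp (-(κ * (d - c)) / h) * (h ^ 2 * ∫ x in a'..c, u x ^ 2) :=
        (hB E' hE').sq_add_momentum_sq_le hh hs hub ⟨hb₂r.le.trans hx.1, hx.2⟩
    _ ≤ _ := by
        rw [mul_pow h]
        gcongr
        exact integral_sq_le_sq_l2Norm_Ioo hs.continuous (by linarith) hB_E.left_lt.le hcL.le

lemma sqrt_mul_exp_neg_div_mul_sq_le {h γ : ℝ} (hh : 0 < h) (hh₁ : h ≤ 1) {B : ℝ} (hB : 0 ≤ B) :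
    √(B * exp (-γ / h) * h ^ 2) ≤ √B * exp (-(γ / 2) / h) := by
  have hexp : exp (-γ / h) = exp (-(γ / 2) / h) ^ 2 := by
    rw [← exp_nat_mul]
    congr 1
    push_cast
    ring
  rw [hexp, mul_assoc, ← mul_pow, Real.sqrt_mul hB, Real.sqrt_sq (by positivity)]
  gcongr
  exact mul_le_of_le_one_right (exp_pos _).le hh₁

theorem quasimode_exponential_decay_near_boundary_general (hV : ContDiff ℝ (⊤ : ℕ∞) V)
    (hV_even : Function.Even V) (ha : 0 ≤ a) (hab : a < b) (haL : a < L) (hbr : b < r)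
    (hbR : b < R) (hV_gt : ∀ x ∈ Ioo a b, V 0 < V x) (hV_lt : ∀ x ∈ Ioc b R, V x < V 0) :
    ∃ C > 0, ∃ c > 0, ∃ h₀ > 0, ∀ h, 0 < h → h < h₀ → ∃ E₀ v,
      |E₀ - V 0| ≤ C * h ∧ ContDiff ℝ (⊤ : ℕ∞) v ∧
      (∀ x, -h ^ 2 * deriv (deriv v) x + (V x - E₀) * v x = 0) ∧
      C⁻¹ ≤ l2Norm (Ioo (-L) L) v ∧
      h1Norm h {x | r < |x| ∧ |x| < R} v (deriv v) ≤ C * exp (-c / h) := by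
  obtain ⟨b₁, hb₁, K, hK, γ, hγ, ε, hε, hdecay⟩ := exists_forall_sq_add_momentum_sq_le_l2Norm
    (mod_cast contDiff_infty.1 hV 1) ha hab haL hbr hbR hV_gt hV_lt
  obtain ⟨A, hA, hsol⟩ := exists_even_schrodingerSolution_l2Norm_eq_one
    (mod_cast contDiff_infty.1 hV 2) hV_even hb₁ (ha.trans_lt haL)
  set M := √(2 * K * volume.real {x : ℝ | r < |x| ∧ |x| < R})
  have hM : 0 ≤ M := Real.sqrt_nonneg _
  refine ⟨1 + A + M, by positivity, γ / 2, by positivity, min 1 (min ((b₁ / π) ^ 2) (ε / A)),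
    by positivity, fun h hh hh₀ ↦ ?_⟩
  simp only [lt_min_iff] at hh₀
  obtain ⟨hh_one, hh_well, hh_energy⟩ := hh₀
  obtain ⟨E₀, v, p, hE₀, hs, hv, hp, hv_one, hvb⟩ := hsol h hh
    ((le_div_iff₀' pi_pos).1 (Real.sqrt_le_iff.2 ⟨by positivity, hh_well.le⟩))
  have hv_small := hdecay E₀ (hE₀.trans ((lt_div_iff₀' hA).1 hh_energy).le) h hh v p hs hvb
  simp only [hv_one, mul_one] at hv_small
  refine ⟨E₀, v, hE₀.trans (by gcongr; linarith),
    hs.contDiff (hV.sub contDiff_const), hs.neg_sq_mul_deriv_deriv_add hh.ne',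
    (inv_le_one_of_one_le₀ (by linarith)).trans_eq hv_one.symm, ?_⟩
  calc h1Norm h {x | r < |x| ∧ |x| < R} v (deriv v)
      ≤ √(2 * K * volume.real {x : ℝ | r < |x| ∧ |x| < R} * exp (-γ / h) * h ^ 2) :=
        (hs.h1Norm_abs_annulus_le hh.ne' hv hp hv_small).trans_eq (by ring_nf)
    _ ≤ M * exp (-(γ / 2) / h) := sqrt_mul_exp_neg_div_mul_sq_le hh hh_one.le (by positivity)
    _ ≤ (1 + A + M) * exp (-(γ / 2) / h) := by gcongr; linarith

end Quasimode

/-- Existence of a quasimode `v` solving `(P(h) - E₀) v = 0` on `[-R, R]`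
with `E₀ = 1 + O(h)`, mass bounded below on `(-3.5, 3.5)` and exponentially small
`H¹_h` norm on `{R - 1 < |x| < R}`. -/
theorem quasimode_exponential_decay_near_boundary
    (V : ℝ → ℝ)
    (hV_smooth : ContDiff ℝ (⊤ : ℕ∞) V) (hV_comp : HasCompactSupport V)
    (hV_nonneg : ∀ x, 0 ≤ V x) (hV_even : ∀ x, V (-x) = V x)
    (hV_inner : ∀ x ∈ Set.Icc (-1 : ℝ) 1, V x = x ^ 2 + 1)
    (hV_slope : ∀ x ∈ Set.Icc (2 : ℝ) 3.5, V x = 4 - x)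
    (hV_lt : ∀ x : ℝ, 3 < x → V x < 1)
    (hV_supp : tsupport V ⊆ Set.Icc (-5 : ℝ) 5)
    (R : ℝ) (hR : 5 < R) :
    ∃ C > (0 : ℝ), ∃ c > (0 : ℝ), ∃ h₀ > (0 : ℝ), ∀ h : ℝ, 0 < h → h < h₀ →
      ∃ E₀ : ℝ, ∃ v : ℝ → ℝ,
        |E₀ - 1| ≤ C * h ∧
        ContDiff ℝ (⊤ : ℕ∞) v ∧
        (∀ x ∈ Set.Icc (-R) R, -h ^ 2 * deriv (deriv v) x + (V x - E₀) * v x = 0) ∧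
        C⁻¹ ≤ l2Norm (Set.Ioo (-3.5 : ℝ) 3.5) v ∧
        h1Norm h {x : ℝ | R - 1 < |x| ∧ |x| < R} v (deriv v) ≤ C * Real.exp (-c / h) := by
  have hV_zero : V 0 = 1 := by simp [hV_inner 0 (by norm_num)]
  obtain ⟨C, hC, c, hc, h₀, hh₀, hv⟩ := quasimode_exponential_decay_near_boundary_general
    (a := 2) (b := 3) (L := 3.5) (r := R - 1) (R := R) hV_smooth hV_even
    (by norm_num) (by norm_num) (by norm_num) (by linarith) (by linarith)
    (fun x hx ↦ by linarith [hV_slope x ⟨hx.1.le, by linarith [hx.2]⟩, hx.2])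
    fun x hx ↦ hV_zero ▸ hV_lt x hx.1
  refine ⟨C, hC, c, hc, h₀, hh₀, fun h hh hhh₀ ↦ ?_⟩
  obtain ⟨E₀, v, hE₀, hv_smooth, hv_eq, hv_mass, hv_decay⟩ := hv h hh hhh₀
  exact ⟨E₀, v, hV_zero ▸ hE₀, hv_smooth, fun x _ ↦ hv_eq x, hv_mass, hv_decay⟩
end
end

section
/- There exist C > 0 and h₀ > 0 such that for every h ∈ (0,h₀) and every R̃ ∈ [R, R+1] there exist E₀ ∈ ℝ and v ∈ C^∞([−R̃, R̃]) satisfying: (P(h) − E₀)v = 0 on [−R̃,R̃]; v(R̃) = v(−R̃) = 0; ‖v‖_{L²(−R̃,R̃)} = 1; ‖v‖_{H¹_h(−R̃,R̃)} ≤ C; and |E₀ − (1 + h)| ≤ C e^{−1/(10h)}. -/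
open MeasureTheory Set Real

noncomputable section

open scoped InnerProductSpace BoundedContinuousFunction NNReal Topology

/-! In the well, `e^{-x²/(2h)}` is an eigenfunction of `P(h)` with eigenvalue `1 + h`. Truncating it
inside `[-1, 1]` produces a function vanishing at the endpoints which solves the eigenvalue equation
up to a commutator supported where `|x| ≥ 1/2`, hence of size `O(e^{-1/(8h)})` up to powers of `h`.
Unless `1 + h` is itself a Dirichlet eigenvalue, the Dirichlet problem at energy `1 + h` is inverted
by a Green operator, which is compact and self-adjoint on `L²`; the quasimode shows that its norm is
large, so it has a large eigenvalue, that is, `P(h)` has an eigenvalue near `1 + h`. Pairing the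
eigenvalue equation with the eigenfunction bounds the `H¹_h` norm. -/

/-! ### Linear second order equations -/

section GlobalExistence

variable {E : Type*} [NormedAddCommGroup E] [NormedSpace ℝ E] [CompleteSpace E]
  {f : ℝ → E → E} {t₀ : ℝ}

theorem exists_forall_mem_Ioo_hasDerivAt_of_lipschitzWith_of_norm_le {T : ℝ} {K L : ℝ≥0}
    (hT : 0 ≤ T) (hcont : ∀ x, Continuous (f · x))
    (hlip : ∀ t ∈ Icc (t₀ - T) (t₀ + T), LipschitzWith K (f t))
    (hnorm : ∀ t ∈ Icc (t₀ - T) (t₀ + T), ∀ x, ‖f t x‖ ≤ L) (x₀ : E) :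
    ∃ α : ℝ → E, α t₀ = x₀ ∧ ∀ t ∈ Ioo (t₀ - T) (t₀ + T), HasDerivAt α (f t (α t)) t := by
  have hPL : IsPicardLindelof f (⟨t₀, by simpa using hT⟩ : Icc (t₀ - T) (t₀ + T)) x₀
      (L * T.toNNReal) 0 L K :=
    { lipschitzOnWith := fun t ht ↦ (hlip t ht).lipschitzOnWith
      continuousOn := fun x _ ↦ (hcont x).continuousOn
      norm_le := fun t ht x _ ↦ hnorm t ht x
      mul_max_le := by simp [hT] }
  obtain ⟨α, hα₀, hα⟩ := hPL.exists_eq_forall_mem_Icc_hasDerivWithinAt₀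
  exact ⟨α, hα₀, fun t ht ↦
    (hα t (Ioo_subset_Icc_self ht)).hasDerivAt (Icc_mem_nhds ht.1 ht.2)⟩

theorem exists_forall_hasDerivAt_of_forall_exists_lipschitzWith
    (hcont : ∀ x, Continuous (f · x))
    (hf : ∀ T : ℝ, ∃ K L : ℝ≥0, ∀ t ∈ Icc (t₀ - T) (t₀ + T),
      LipschitzWith K (f t) ∧ ∀ x, ‖f t x‖ ≤ L) (x₀ : E) :
    ∃ α : ℝ → E, α t₀ = x₀ ∧ ∀ t, HasDerivAt α (f t (α t)) t := by
  choose K L hKL using hf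
  have hlocal (n : ℕ) := exists_forall_mem_Ioo_hasDerivAt_of_lipschitzWith_of_norm_le
    n.cast_nonneg hcont (fun t ht ↦ (hKL n t ht).1) (fun t ht ↦ (hKL n t ht).2) x₀
  choose α hα₀ hα using hlocal
  have hagree {m n : ℕ} (hmn : m ≤ n) : EqOn (α m) (α n) (Ioo (t₀ - m) (t₀ + m)) := by
    intro t ht
    have hm : (0 : ℝ) < m := by linarith [ht.1, ht.2]
    have hsub : Ioo (t₀ - m) (t₀ + m) ⊆ Ioo (t₀ - n) (t₀ + n) := by gcongr
    exact ODE_solution_unique_of_mem_Ioo (s := fun _ ↦ univ) (t₀ := t₀)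
      (fun s hs ↦ (hKL m s (Ioo_subset_Icc_self hs)).1.lipschitzOnWith)
      (by simpa using hm) (fun s hs ↦ ⟨hα m s hs, mem_univ _⟩)
      (fun s hs ↦ ⟨hα n s (hsub hs), mem_univ _⟩) ((hα₀ m).trans (hα₀ n).symm) ht
  let N (t : ℝ) : ℕ := ⌊|t - t₀|⌋₊ + 1
  have hN (t : ℝ) : t ∈ Ioo (t₀ - N t) (t₀ + N t) := by
    have := abs_lt.1 (Nat.lt_floor_add_one |t - t₀|)
    push_cast [N]
    constructor <;> linarith
  have hglue (n : ℕ) : EqOn (fun t ↦ α (N t) t) (α n) (Ioo (t₀ - n) (t₀ + n)) := by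
    intro t ht
    rcases le_total (N t) n with hle | hle
    · exact hagree hle (hN t)
    · exact (hagree hle ht).symm
  refine ⟨fun t ↦ α (N t) t, hα₀ _, fun t ↦ ?_⟩
  exact (hα (N t) t (hN t)).congr_of_eventuallyEq
    ((hglue (N t)).eventuallyEq_of_mem (Ioo_mem_nhds (hN t).1 (hN t).2))

end GlobalExistence

/-- `u` solves the Sturm–Liouville equation `u'' = q u + ψ` on the whole line, with derivative `u'`.
The homogeneous equation is the case `ψ = 0`. -/
structure IsSturmSolution (q ψ u u' : ℝ → ℝ) : Prop where
  hasDerivAt (x : ℝ) : HasDerivAt u (u' x) x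
  hasDerivAt_deriv (x : ℝ) : HasDerivAt u' (q x * u x + ψ x) x

namespace IsSturmSolution

variable {q ψ u u' v v' w w' : ℝ → ℝ}

lemma deriv_eq (hu : IsSturmSolution q ψ u u') : deriv u = u' :=
  funext fun x ↦ (hu.hasDerivAt x).deriv

lemma deriv_deriv_eq (hu : IsSturmSolution q ψ u u') : deriv u' = fun x ↦ q x * u x + ψ x :=
  funext fun x ↦ (hu.hasDerivAt_deriv x).deriv

lemma continuous (hu : IsSturmSolution q ψ u u') : Continuous u :=
  continuous_iff_continuousAt.2 fun x ↦ (hu.hasDerivAt x).continuousAt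

lemma continuous_deriv (hu : IsSturmSolution q ψ u u') : Continuous u' :=
  continuous_iff_continuousAt.2 fun x ↦ (hu.hasDerivAt_deriv x).continuousAt

lemma const_mul (hu : IsSturmSolution q ψ u u') (c : ℝ) :
    IsSturmSolution q (fun x ↦ c * ψ x) (fun x ↦ c * u x) (fun x ↦ c * u' x) where
  hasDerivAt x := (hu.hasDerivAt x).const_mul c
  hasDerivAt_deriv x := ((hu.hasDerivAt_deriv x).const_mul c).congr_deriv (by ring)

lemma contDiff (hu : IsSturmSolution q ψ u u') (hq : ContDiff ℝ (⊤ : ℕ∞) q)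
    (hψ : ContDiff ℝ (⊤ : ℕ∞) ψ) : ContDiff ℝ (⊤ : ℕ∞) u := by
  have hboth (n : ℕ) : ContDiff ℝ n u ∧ ContDiff ℝ n u' := by
    induction n with
    | zero => exact ⟨contDiff_zero.2 hu.continuous, contDiff_zero.2 hu.continuous_deriv⟩
    | succ n ih =>
      push_cast
      simp only [contDiff_succ_iff_deriv, hu.deriv_eq, hu.deriv_deriv_eq]
      exact ⟨⟨fun x ↦ (hu.hasDerivAt x).differentiableAt, by simp, ih.2⟩,
        fun x ↦ (hu.hasDerivAt_deriv x).differentiableAt, by simp,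
        ((hq.of_le (mod_cast le_top)).mul ih.1).add (hψ.of_le (mod_cast le_top))⟩
  exact contDiff_infty.2 fun n ↦ (hboth n).1

lemma hasDerivAt_wronskian (hu : IsSturmSolution q 0 u u') (hw : IsSturmSolution q ψ w w')
    (x : ℝ) : HasDerivAt (fun x ↦ u x * w' x - u' x * w x) (u x * ψ x) x :=
  (((hu.hasDerivAt x).mul (hw.hasDerivAt_deriv x)).sub
    ((hu.hasDerivAt_deriv x).mul (hw.hasDerivAt x))).congr_deriv
      (by simp only [Pi.zero_apply]; ring)

lemma integral_mul_eq_wronskian_sub (hu : IsSturmSolution q 0 u u')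
    (hw : IsSturmSolution q ψ w w') (hψ : Continuous ψ) (x y : ℝ) :
    ∫ t in x..y, u t * ψ t = (u y * w' y - u' y * w y) - (u x * w' x - u' x * w x) :=
  intervalIntegral.integral_eq_sub_of_hasDerivAt (fun t _ ↦ hu.hasDerivAt_wronskian hw t)
    ((hu.continuous.mul hψ).intervalIntegrable _ _)

lemma wronskian_eq (hu : IsSturmSolution q 0 u u') (hv : IsSturmSolution q 0 v v') (x y : ℝ) :
    u x * v' x - u' x * v x = u y * v' y - u' y * v y := by
  have := hu.integral_mul_eq_wronskian_sub hv continuous_zero x y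
  simp only [Pi.zero_apply, mul_zero, intervalIntegral.integral_zero] at this
  linarith

end IsSturmSolution

lemma lipschitzWith_sin_sq : LipschitzWith 1 fun θ ↦ sin θ ^ 2 := by
  refine lipschitzWith_of_nnnorm_deriv_le (by fun_prop) fun θ ↦ ?_
  have hderiv : deriv (fun θ ↦ sin θ ^ 2) θ = sin (2 * θ) :=
    ((hasDerivAt_sin θ).pow 2).deriv.trans (by rw [sin_two_mul]; ring)
  rw [hderiv, ← NNReal.coe_le_coe]
  exact abs_sin_le_one _

-- The Prüfer angle equation `θ' = cos² θ - q sin² θ` has a right-hand side bounded in `θ`, so its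
-- solutions, unlike those of the Riccati equation, are global.
lemma exists_prufer_angle {q : ℝ → ℝ} (hq : Continuous q) (a θ₀ : ℝ) :
    ∃ θ : ℝ → ℝ, θ a = θ₀ ∧ ∀ x, HasDerivAt θ (1 - (1 + q x) * sin (θ x) ^ 2) x := by
  refine exists_forall_hasDerivAt_of_forall_exists_lipschitzWith
    (f := fun x θ ↦ 1 - (1 + q x) * sin θ ^ 2) (fun θ ↦ by fun_prop) (fun T ↦ ?_) θ₀
  obtain ⟨B, hB⟩ := (isCompact_Icc (a := a - T) (b := a + T)).exists_bound_of_continuousOn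
    (f := fun x ↦ 1 + q x) (by fun_prop)
  refine ⟨B.toNNReal, 1 + B.toNNReal, fun x hx ↦ ⟨?_, fun θ ↦ ?_⟩⟩
  · refine LipschitzWith.of_dist_le_mul fun θ η ↦ ?_
    calc dist (1 - (1 + q x) * sin θ ^ 2) (1 - (1 + q x) * sin η ^ 2)
        = ‖1 + q x‖ * dist (sin θ ^ 2) (sin η ^ 2) := by
          rw [dist_sub_left, dist_eq_norm, dist_eq_norm, ← norm_mul, mul_sub]
      _ ≤ B.toNNReal * dist θ η := by
          gcongr
          · exact (hB x hx).trans (le_coe_toNNReal B)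
          · simpa using lipschitzWith_sin_sq.dist_le_mul θ η
  · calc ‖1 - (1 + q x) * sin θ ^ 2‖ ≤ ‖(1 : ℝ)‖ + ‖1 + q x‖ * ‖sin θ ^ 2‖ := by
          rw [← norm_mul]; exact norm_sub_le _ _
      _ ≤ 1 + B.toNNReal * 1 := by
          gcongr
          · simp
          · exact (hB x hx).trans (le_coe_toNNReal B)
          · simpa using sin_sq_le_one θ
      _ = ↑(1 + B.toNNReal) := by push_cast; ring

/- Prüfer's substitution: with `θ' = cos² θ - q sin² θ` and `G' = (1 + q) sin θ cos θ`, the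
functions `u = e^G sin θ` and `u' = e^G cos θ` solve the linear equation. -/
theorem exists_isSturmSolution {q : ℝ → ℝ} (hq : Continuous q) (a : ℝ) :
    ∃ u u' : ℝ → ℝ, IsSturmSolution q 0 u u' ∧ u a = 0 ∧ u' a = 1 := by
  obtain ⟨θ, hθa, hθ⟩ := exists_prufer_angle hq a 0
  have hθc : Continuous θ := continuous_iff_continuousAt.2 fun x ↦ (hθ x).continuousAt
  let g (x : ℝ) : ℝ := (1 + q x) * sin (θ x) * cos (θ x)
  have hG (x : ℝ) : HasDerivAt (fun x ↦ ∫ t in a..x, g t) (g x) x :=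
    (by fun_prop : Continuous g).integral_hasStrictDerivAt a x |>.hasDerivAt
  refine ⟨fun x ↦ exp (∫ t in a..x, g t) * sin (θ x), fun x ↦ exp (∫ t in a..x, g t) * cos (θ x),
    ⟨fun x ↦ ((hG x).exp.mul (hθ x).sin).congr_deriv ?_,
      fun x ↦ ((hG x).exp.mul (hθ x).cos).congr_deriv ?_⟩, by simp [hθa], by simp [hθa]⟩
  · ring
  · simp only [Pi.zero_apply, g]
    linear_combination
      exp (∫ t in a..x, g t) * (1 + q x) * sin (θ x) * sin_sq_add_cos_sq (θ x)

/-! ### Integral operators with a continuous kernel -/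

theorem exists_hasEigenvalue_norm_eq_of_isCompactOperator {E : Type*} [NormedAddCommGroup E]
    [InnerProductSpace ℝ E] [CompleteSpace E] {T : E →L[ℝ] E} (hT : IsCompactOperator T)
    (hsymm : T.IsSymmetric) (hT0 : T ≠ 0) :
    ∃ μ : ℝ, Module.End.HasEigenvalue (T : Module.End ℝ E) μ ∧ ‖μ‖ = ‖T‖ := by
  have hradius := T.spectralRadius_eq_nnnorm hsymm.isSelfAdjoint
  have hspec : (spectrum ℝ T).Nonempty := by
    by_contra! hempty
    rw [spectralRadius, hempty] at hradius
    exact hT0 (by simpa using hradius.symm)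
  obtain ⟨μ, hμ, hnorm⟩ := spectrum.exists_nnnorm_eq_spectralRadius_of_nonempty hspec
  have hμT : ‖μ‖ = ‖T‖ := by simpa [← NNReal.coe_inj] using hnorm.trans hradius
  have hμ0 : μ ≠ 0 := norm_ne_zero_iff.1 (hμT ▸ norm_ne_zero_iff.2 hT0)
  exact ⟨μ, (hT.hasEigenvalue_iff_mem_spectrum hμ0).2 hμ, hμT⟩

-- The hypotheses give `1 ≤ ε ‖T‖`, and `T` has an eigenvalue of modulus `‖T‖`.
theorem exists_apply_eq_smul_abs_inv_le {E : Type*} [NormedAddCommGroup E]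
    [InnerProductSpace ℝ E] [CompleteSpace E] {T : E →L[ℝ] E} (hT : IsCompactOperator T)
    (hsymm : T.IsSymmetric) {x y : E} {ε : ℝ} (hx : x ≠ 0) (hTy : T y = x)
    (hy : ‖y‖ ≤ ε * ‖x‖) :
    ∃ μ : ℝ, μ ≠ 0 ∧ |μ⁻¹| ≤ ε ∧ ∃ z ≠ 0, T z = μ • z := by
  have hT0 : T ≠ 0 := fun h ↦ hx (by simp [← hTy, h])
  obtain ⟨μ, hμ, hμT⟩ := exists_hasEigenvalue_norm_eq_of_isCompactOperator hT hsymm hT0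
  have hTpos : 0 < ‖T‖ := norm_pos_iff.2 hT0
  have hle : ‖x‖ ≤ ‖T‖ * ε * ‖x‖ := by
    calc ‖x‖ ≤ ‖T‖ * ‖y‖ := hTy ▸ T.le_opNorm y
      _ ≤ ‖T‖ * (ε * ‖x‖) := by gcongr
      _ = ‖T‖ * ε * ‖x‖ := (mul_assoc _ _ _).symm
  obtain ⟨z, hz⟩ := hμ.exists_hasEigenvector
  refine ⟨μ, norm_pos_iff.1 (hμT ▸ hTpos), ?_, z, hz.2, hz.apply_eq_smul⟩
  rw [abs_inv, ← Real.norm_eq_abs, hμT, inv_le_iff_one_le_mul₀' hTpos]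
  exact le_of_mul_le_mul_right (by simpa using hle) (norm_pos_iff.2 hx)

section KernelOperator

variable {X E : Type*} [TopologicalSpace X] [CompactSpace X]
  [NormedAddCommGroup E] [InnerProductSpace ℝ E]

/-- The operator `f ↦ (x ↦ ⟪κ x, f⟫)` into the continuous functions on a compact space `X`. -/
def innerFamily (κ : C(X, E)) : E →L[ℝ] X →ᵇ ℝ :=
  LinearMap.mkContinuous
    { toFun := fun f ↦ .mkOfCompact ⟨fun x ↦ ⟪κ x, f⟫_ℝ, by fun_prop⟩
      map_add' := fun f g ↦ by ext x; simp [inner_add_right]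
      map_smul' := fun c f ↦ by ext x; simp [inner_smul_right] }
    ‖κ‖ fun f ↦ (BoundedContinuousFunction.norm_le (by positivity)).2 fun x ↦
      (norm_inner_le_norm _ _).trans (by gcongr; exact κ.norm_coe_le_norm x)

@[simp] lemma innerFamily_apply (κ : C(X, E)) (f : E) (x : X) :
    innerFamily κ f x = ⟪κ x, f⟫_ℝ := rfl

lemma isCompactOperator_innerFamily (κ : C(X, E)) : IsCompactOperator (innerFamily κ) := by
  rw [isCompactOperator_iff_exists_mem_nhds_image_subset_compact]
  refine ⟨Metric.ball 0 1, Metric.ball_mem_nhds 0 one_pos, _,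
    BoundedContinuousFunction.arzela_ascoli _ (isCompact_closedBall 0 ‖κ‖)
      (innerFamily κ '' Metric.ball 0 1) ?_ fun x ↦ ?_, subset_closure⟩
  · rintro - x ⟨f, hf, rfl⟩
    rw [mem_ball_zero_iff] at hf
    rw [mem_closedBall_zero_iff]
    calc ‖⟪κ x, f⟫_ℝ‖ ≤ ‖κ x‖ * ‖f‖ := norm_inner_le_norm _ _
      _ ≤ ‖κ‖ * 1 := by gcongr; exact κ.norm_coe_le_norm x
      _ = ‖κ‖ := mul_one _
  · refine Metric.equicontinuousAt_of_continuity_modulus (fun y ↦ dist (κ y) (κ x)) ?_ _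
      (.of_forall ?_)
    · simpa using (κ.continuous.dist (continuous_const (y := κ x))).tendsto x
    · rintro y ⟨-, f, hf, rfl⟩
      rw [mem_ball_zero_iff] at hf
      calc dist ⟪κ x, f⟫_ℝ ⟪κ y, f⟫_ℝ = ‖⟪κ x - κ y, f⟫_ℝ‖ := by
            rw [dist_eq_norm, inner_sub_left]
        _ ≤ ‖κ x - κ y‖ * ‖f‖ := norm_inner_le_norm _ _
        _ ≤ ‖κ x - κ y‖ * 1 := by gcongr
        _ = dist (κ y) (κ x) := by rw [mul_one, ← dist_eq_norm, dist_comm]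

variable [MeasurableSpace X] [BorelSpace X]
  {μ : Measure X} [IsFiniteMeasure μ]

variable (μ) in
/-- The integral operator on `L²(μ)` with continuous kernel `k`, mapping into the continuous
functions. -/
def kernelOperator (k : C(X × X, ℝ)) : Lp ℝ 2 μ →L[ℝ] X →ᵇ ℝ :=
  innerFamily (ContinuousMap.comp (ContinuousMap.toLp 2 μ ℝ : C(X, ℝ) →L[ℝ] Lp ℝ 2 μ) k.curry)

lemma kernelOperator_apply (k : C(X × X, ℝ)) (f : Lp ℝ 2 μ) (x : X) :
    kernelOperator μ k f x = ∫ y, k (x, y) * f y ∂μ := by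
  rw [kernelOperator, innerFamily_apply, L2.inner_def]
  refine integral_congr_ae ?_
  filter_upwards [ContinuousMap.coeFn_toLp (p := 2) (𝕜 := ℝ) μ (k.curry x)] with y hy
  change f y * (ContinuousMap.toLp 2 μ ℝ (k.curry x) : Lp ℝ 2 μ) y = _
  rw [hy, ContinuousMap.curry_apply, mul_comm]

variable (μ) in
/-- The integral operator with continuous kernel `k` as an endomorphism of `L²(μ)`. -/
def kernelEndomorphism (k : C(X × X, ℝ)) : Lp ℝ 2 μ →L[ℝ] Lp ℝ 2 μ :=
  BoundedContinuousFunction.toLp 2 μ ℝ ∘L kernelOperator μ k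

lemma isCompactOperator_kernelEndomorphism (k : C(X × X, ℝ)) :
    IsCompactOperator (kernelEndomorphism μ k) :=
  (isCompactOperator_innerFamily _).clm_comp (BoundedContinuousFunction.toLp 2 μ ℝ)

lemma coeFn_kernelEndomorphism (k : C(X × X, ℝ)) (f : Lp ℝ 2 μ) :
    kernelEndomorphism μ k f =ᵐ[μ] kernelOperator μ k f :=
  BoundedContinuousFunction.coeFn_toLp 2 μ ℝ _

lemma isSymmetric_kernelEndomorphism [SecondCountableTopology X] {k : C(X × X, ℝ)}
    (hk : ∀ x y, k (x, y) = k (y, x)) : (kernelEndomorphism μ k).IsSymmetric := by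
  have hinner (f g : Lp ℝ 2 μ) :
      ⟪f, kernelEndomorphism μ k g⟫_ℝ = ∫ x, ∫ y, f x * k (x, y) * g y ∂μ ∂μ := by
    rw [L2.inner_def]
    refine integral_congr_ae ?_
    filter_upwards [coeFn_kernelEndomorphism k g] with x hx
    simp only [hx, kernelOperator_apply, mul_assoc, integral_const_mul]
    simp [mul_comm]
  have hintegrable (f g : Lp ℝ 2 μ) :
      Integrable (fun z : X × X ↦ f z.1 * k z * g z.2) (μ.prod μ) := by
    have hf : Integrable f μ := (Lp.memLp f).integrable (by norm_num)
    have hg : Integrable g μ := (Lp.memLp g).integrable (by norm_num)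
    refine ((hf.mul_prod hg).bdd_mul (c := ‖k‖) k.continuous.aestronglyMeasurable
      (.of_forall k.norm_coe_le_norm)).congr (.of_forall fun z ↦ ?_)
    ring
  intro f g
  calc ⟪kernelEndomorphism μ k f, g⟫_ℝ = ∫ x, ∫ y, g x * k (x, y) * f y ∂μ ∂μ := by
        rw [real_inner_comm, hinner]
    _ = ∫ y, ∫ x, g x * k (x, y) * f y ∂μ ∂μ := integral_integral_swap (hintegrable g f)
    _ = ∫ y, ∫ x, f y * k (y, x) * g x ∂μ ∂μ := by
        congr! 4 with y x
        rw [hk x y]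
        ring
    _ = ⟪f, kernelEndomorphism μ k g⟫_ℝ := (hinner f g).symm

end KernelOperator

/-! ### Green operators and the Dirichlet problem -/

/-- The solution operator `ψ ↦ w` of the Dirichlet problem `w'' = q w + ψ`, `w a = w b = 0`, given
solutions `u`, `v` of the homogeneous equation with `u a = v b = 0` and Wronskian `1`. -/
def greenOperator (a b : ℝ) (u v ψ : ℝ → ℝ) (x : ℝ) : ℝ :=
  v x * (∫ t in a..x, u t * ψ t) + u x * ∫ t in x..b, v t * ψ t

/-- `u` and `v` solve `y'' = q y`, vanish at `a` and `b` respectively, and have Wronskian `1`; these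
are the data from which the Dirichlet Green's function of `[a, b]` is built. -/
structure IsGreenPair (q : ℝ → ℝ) (a b : ℝ) (u u' v v' : ℝ → ℝ) : Prop where
  left : IsSturmSolution q 0 u u'
  right : IsSturmSolution q 0 v v'
  left_eq_zero : u a = 0
  right_eq_zero : v b = 0
  wronskian (x : ℝ) : u x * v' x - u' x * v x = 1

namespace IsGreenPair

variable {q ψ u u' v v' w w' : ℝ → ℝ} {a b : ℝ}

lemma isSturmSolution_greenOperator (h : IsGreenPair q a b u u' v v') (hψ : Continuous ψ) :
    IsSturmSolution q ψ (greenOperator a b u v ψ)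
      (fun x ↦ v' x * (∫ t in a..x, u t * ψ t) + u' x * ∫ t in x..b, v t * ψ t) := by
  have hleft (x : ℝ) : HasDerivAt (fun x ↦ ∫ t in a..x, u t * ψ t) (u x * ψ x) x :=
    ((h.left.continuous.mul hψ).integral_hasStrictDerivAt a x).hasDerivAt
  have hright (x : ℝ) : HasDerivAt (fun x ↦ ∫ t in x..b, v t * ψ t) (-(v x * ψ x)) x := by
    have hc := h.right.continuous.mul hψ
    exact intervalIntegral.integral_hasDerivAt_left (hc.intervalIntegrable _ _)
      (hc.stronglyMeasurableAtFilter _ _) hc.continuousAt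
  constructor <;> intro x
  · exact (((h.right.hasDerivAt x).mul (hleft x)).add
      ((h.left.hasDerivAt x).mul (hright x))).congr_deriv (by ring)
  · refine (((h.right.hasDerivAt_deriv x).mul (hleft x)).add
      ((h.left.hasDerivAt_deriv x).mul (hright x))).congr_deriv ?_
    simp only [Pi.zero_apply, greenOperator]
    linear_combination ψ x * h.wronskian x

lemma greenOperator_left (h : IsGreenPair q a b u u' v v') : greenOperator a b u v ψ a = 0 := by
  simp [greenOperator, h.left_eq_zero]

lemma greenOperator_right (h : IsGreenPair q a b u u' v v') : greenOperator a b u v ψ b = 0 := by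
  simp [greenOperator, h.right_eq_zero]

lemma greenOperator_eq (h : IsGreenPair q a b u u' v v') (hw : IsSturmSolution q ψ w w')
    (hψ : Continuous ψ) (hwa : w a = 0) (hwb : w b = 0) : greenOperator a b u v ψ = w := by
  ext x
  rw [greenOperator, h.left.integral_mul_eq_wronskian_sub hw hψ,
    h.right.integral_mul_eq_wronskian_sub hw hψ, hwa, hwb, h.left_eq_zero, h.right_eq_zero]
  linear_combination w x * h.wronskian x

/-- The Green's function `u (min x y) * v (max x y)` as a continuous kernel on `[a, b]`. -/
def kernel (h : IsGreenPair q a b u u' v v') : C(Icc a b × Icc a b, ℝ) where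
  toFun z := u (min z.1 z.2) * v (max z.1 z.2)
  continuous_toFun := by
    have := h.left.continuous
    have := h.right.continuous
    fun_prop

lemma kernel_symm (h : IsGreenPair q a b u u' v v') (x y : Icc a b) :
    h.kernel (x, y) = h.kernel (y, x) := by
  simp [kernel, min_comm, max_comm]

lemma integral_kernel_mul (h : IsGreenPair q a b u u' v v') (hψ : Continuous ψ) (x : Icc a b) :
    ∫ y, h.kernel (x, y) * ψ y ∂volume.comap Subtype.val = greenOperator a b u v ψ x := by
  have hc : Continuous fun y ↦ u (min x y) * v (max x y) * ψ y := by
    have := h.left.continuous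
    have := h.right.continuous
    fun_prop
  have hleft : ∫ y in a..x, u (min x y) * v (max x y) * ψ y = v x * ∫ y in a..x, u y * ψ y := by
    rw [← intervalIntegral.integral_const_mul]
    refine intervalIntegral.integral_congr fun y hy ↦ ?_
    rw [uIcc_of_le x.2.1] at hy
    simp only [min_eq_right hy.2, max_eq_left hy.2]
    ring
  have hright : ∫ y in x..b, u (min x y) * v (max x y) * ψ y = u x * ∫ y in x..b, v y * ψ y := by
    rw [← intervalIntegral.integral_const_mul]
    refine intervalIntegral.integral_congr fun y hy ↦ ?_
    rw [uIcc_of_le x.2.2] at hy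
    simp only [min_eq_left hy.1, max_eq_right hy.1]
    ring
  calc ∫ y, h.kernel (x, y) * ψ y ∂volume.comap Subtype.val
      = ∫ y in Icc a b, u (min x y) * v (max x y) * ψ y :=
        integral_subtype_comap measurableSet_Icc fun y ↦ u (min x y) * v (max x y) * ψ y
    _ = ∫ y in a..b, u (min x y) * v (max x y) * ψ y := by
        rw [integral_Icc_eq_integral_Ioc, intervalIntegral.integral_of_le (x.2.1.trans x.2.2)]
    _ = greenOperator a b u v ψ x := by
        rw [greenOperator, ← hleft, ← hright, intervalIntegral.integral_add_adjacent_intervals]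
          <;> exact hc.intervalIntegrable _ _

end IsGreenPair

/-- Zero is an eigenvalue of `u ↦ -u'' + q u` on `[a, b]` with Dirichlet boundary conditions. -/
def HasDirichletSolution (q : ℝ → ℝ) (a b : ℝ) : Prop :=
  ∃ u u' : ℝ → ℝ, IsSturmSolution q 0 u u' ∧ u a = 0 ∧ u b = 0 ∧ ∃ x ∈ Icc a b, u x ≠ 0

theorem hasDirichletSolution_or_exists_isGreenPair {q : ℝ → ℝ} (hq : Continuous q) {a b : ℝ}
    (hab : a < b) :
    HasDirichletSolution q a b ∨ ∃ u u' v v' : ℝ → ℝ, IsGreenPair q a b u u' v v' := by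
  obtain ⟨u, u', hu, hua, hu'a⟩ := exists_isSturmSolution hq a
  obtain ⟨v, v', hv, hvb, hv'b⟩ := exists_isSturmSolution hq b
  by_cases hub : u b = 0
  · have hne : ∀ᶠ x in 𝓝[>] a, u x ≠ 0 :=
      ((hu.hasDerivAt a).eventually_ne (by simp [hu'a])).filter_mono
        (nhdsWithin_mono a fun x hx ↦ (mem_Ioi.1 hx).ne')
    obtain ⟨x, hux, hx⟩ := (hne.and (Ioo_mem_nhdsGT hab)).exists
    exact .inl ⟨u, u', hu, hua, hub, x, Ioo_subset_Icc_self hx, hux⟩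
  · have hv := hv.const_mul (u b)⁻¹
    simp only [Pi.zero_apply, mul_zero] at hv
    refine .inr ⟨u, u', _, _, hu, hv, hua, by simp [hvb], fun x ↦ ?_⟩
    rw [hu.wronskian_eq hv x b, hvb, hv'b]
    simp [hub]

theorem hasDirichletSolution_of_isSturmSolution {q ψ w w' : ℝ → ℝ} (hq : Continuous q)
    (hψ : Continuous ψ) {a b : ℝ} (hab : a < b) (hw : IsSturmSolution q ψ w w') (hwa : w a = 0)
    (hwb : w b = 0) (hψ0 : ∀ x ∈ Icc a b, ψ x = 0) (hw0 : ∃ x ∈ Icc a b, w x ≠ 0) :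
    HasDirichletSolution q a b := by
  refine (hasDirichletSolution_or_exists_isGreenPair hq hab).resolve_right ?_
  rintro ⟨u, u', v, v', h⟩
  obtain ⟨x, hx, hwx⟩ := hw0
  have hvanish (f : ℝ → ℝ) {y z : ℝ} (hy : y ∈ Icc a b) (hz : z ∈ Icc a b) :
      ∫ t in y..z, f t * ψ t = 0 :=
    intervalIntegral.integral_zero_ae <| .of_forall fun t ht ↦ by
      rw [hψ0 t (uIcc_subset_Icc hy hz (uIoc_subset_uIcc ht)), mul_zero]
  rw [← h.greenOperator_eq hw hψ hwa hwb, greenOperator, hvanish u (left_mem_Icc.2 hab.le) hx,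
    hvanish v hx (right_mem_Icc.2 hab.le)] at hwx
  simp at hwx

instance isFiniteMeasure_comap_Icc (a b : ℝ) :
    IsFiniteMeasure (volume.comap (Subtype.val : Icc a b → ℝ)) := by
  have := IsFiniteMeasureOnCompacts.comap' (volume : Measure ℝ) (f := (Subtype.val : Icc a b → ℝ))
    continuous_subtype_val (.subtype_coe measurableSet_Icc)
  infer_instance

lemma norm_toLp_restrict_sq (f : C(ℝ, ℝ)) {a b : ℝ} (hab : a ≤ b) :
    ‖ContinuousMap.toLp 2 (volume.comap Subtype.val) ℝ (f.restrict (Icc a b))‖ ^ 2 =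
      ∫ x in a..b, f x ^ 2 := by
  calc ‖ContinuousMap.toLp 2 (volume.comap Subtype.val) ℝ (f.restrict (Icc a b))‖ ^ 2
      = ∫ x : Icc a b, f x ^ 2 ∂volume.comap Subtype.val := by
        rw [← real_inner_self_eq_norm_sq, ContinuousMap.inner_toLp]
        simp [pow_two]
    _ = ∫ x in Icc a b, f x ^ 2 := integral_subtype_comap measurableSet_Icc fun x ↦ f x ^ 2
    _ = ∫ x in a..b, f x ^ 2 := by
        rw [integral_Icc_eq_integral_Ioc, intervalIntegral.integral_of_le hab]

namespace IsGreenPair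

variable {q u u' v v' : ℝ → ℝ} {a b : ℝ}

lemma kernelOperator_apply_of_ae_eq (h : IsGreenPair q a b u u' v v') {ψ : ℝ → ℝ}
    (hψ : Continuous ψ) {f : Lp ℝ 2 (volume.comap (Subtype.val : Icc a b → ℝ))}
    (hf : f =ᵐ[volume.comap Subtype.val] fun x ↦ ψ x) (x : Icc a b) :
    kernelOperator _ h.kernel f x = greenOperator a b u v ψ x := by
  rw [kernelOperator_apply, ← h.integral_kernel_mul hψ]
  refine integral_congr_ae ?_
  filter_upwards [hf] with y hy
  rw [hy]

lemma hasDirichletSolution_of_kernelEndomorphism_eq_smul (h : IsGreenPair q a b u u' v v')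
    (hq : Continuous q) (hab : a < b) {μ : ℝ} (hμ0 : μ ≠ 0)
    {f : Lp ℝ 2 (volume.comap (Subtype.val : Icc a b → ℝ))} (hf0 : f ≠ 0)
    (hf : kernelEndomorphism _ h.kernel f = μ • f) :
    HasDirichletSolution (fun x ↦ q x + μ⁻¹) a b := by
  set g := kernelOperator _ h.kernel f with hg
  -- the continuous representative of `μ • f`, extended to the line
  let F : ℝ → ℝ := IccExtend hab.le g
  have hF : Continuous F := g.continuous.Icc_extend'
  have hFg (x : Icc a b) : F x = g x := IccExtend_val _ _ _
  have hFf : (μ • f : Lp ℝ 2 _) =ᵐ[volume.comap Subtype.val] fun x ↦ F x := by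
    simpa only [hf, hFg] using coeFn_kernelEndomorphism h.kernel f
  have hgreen (x : Icc a b) : greenOperator a b u v F x = μ * F x := by
    rw [← h.kernelOperator_apply_of_ae_eq hF hFf, map_smul, hFg]
    rfl
  have hw := h.isSturmSolution_greenOperator hF
  refine hasDirichletSolution_of_isSturmSolution
    (q := fun x ↦ q x + μ⁻¹) (ψ := fun x ↦ F x - μ⁻¹ * greenOperator a b u v F x)
    (hq.add continuous_const) (hF.sub (continuous_const.mul hw.continuous)) hab
    ⟨hw.hasDerivAt, fun x ↦ (hw.hasDerivAt_deriv x).congr_deriv (by ring)⟩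
    h.greenOperator_left h.greenOperator_right (fun x hx ↦ ?_) ?_
  · rw [hgreen ⟨x, hx⟩, inv_mul_cancel_left₀ hμ0, sub_self]
  · by_contra! hzero
    have hg0 : g = 0 := by
      ext x
      simpa [← hFg, hgreen x, hμ0] using hzero x x.2
    have hf_zero : μ • f = 0 := by rw [← hf, kernelEndomorphism, ContinuousLinearMap.comp_apply,
      ← hg, hg0, map_zero]
    exact hf0 ((smul_eq_zero.1 hf_zero).resolve_left hμ0)

end IsGreenPair

theorem exists_abs_le_hasDirichletSolution {q φ φ' ψ : ℝ → ℝ} (hq : Continuous q)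
    (hψ : Continuous ψ) (hφ : IsSturmSolution q ψ φ φ') {a b : ℝ} (hab : a < b) (hφa : φ a = 0)
    (hφb : φ b = 0) {ε : ℝ} (hε : 0 ≤ ε) (hpos : 0 < ∫ x in a..b, φ x ^ 2)
    (hle : ∫ x in a..b, ψ x ^ 2 ≤ ε ^ 2 * ∫ x in a..b, φ x ^ 2) :
    ∃ c : ℝ, |c| ≤ ε ∧ HasDirichletSolution (fun x ↦ q x + c) a b := by
  rcases hasDirichletSolution_or_exists_isGreenPair hq hab with hdir | ⟨u, u', v, v', h⟩
  · exact ⟨0, by simpa using hε, by simpa using hdir⟩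
  let x := ContinuousMap.toLp 2 (volume.comap Subtype.val) ℝ
    ((⟨φ, hφ.continuous⟩ : C(ℝ, ℝ)).restrict (Icc a b))
  let y := ContinuousMap.toLp 2 (volume.comap Subtype.val) ℝ
    ((⟨ψ, hψ⟩ : C(ℝ, ℝ)).restrict (Icc a b))
  have hx : ‖x‖ ^ 2 = ∫ t in a..b, φ t ^ 2 := norm_toLp_restrict_sq _ hab.le
  have hy : ‖y‖ ^ 2 = ∫ t in a..b, ψ t ^ 2 := norm_toLp_restrict_sq _ hab.le
  have hTy : kernelEndomorphism _ h.kernel y = x := by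
    refine Lp.ext ((coeFn_kernelEndomorphism h.kernel y).trans ?_)
    filter_upwards [ContinuousMap.coeFn_toLp (p := 2) (𝕜 := ℝ) (volume.comap Subtype.val)
      ((⟨φ, hφ.continuous⟩ : C(ℝ, ℝ)).restrict (Icc a b))] with t ht
    rw [ht, h.kernelOperator_apply_of_ae_eq hψ (ContinuousMap.coeFn_toLp _ _),
      h.greenOperator_eq hφ hψ hφa hφb]
    rfl
  have hx0 : x ≠ 0 := by
    rintro hx0
    simp [← hx, hx0] at hpos
  have hyx : ‖y‖ ≤ ε * ‖x‖ := le_of_sq_le_sq (by rwa [hy, mul_pow, hx]) (by positivity)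
  obtain ⟨μ, hμ0, hμε, f, hf0, hf⟩ := exists_apply_eq_smul_abs_inv_le
    (isCompactOperator_kernelEndomorphism _) (isSymmetric_kernelEndomorphism h.kernel_symm)
    hx0 hTy hyx
  exact ⟨μ⁻¹, hμε, h.hasDirichletSolution_of_kernelEndomorphism_eq_smul hq hab hμ0 hf0 hf⟩

/-! ### The semiclassical quasimode -/

lemma HasDirichletSolution.exists_integral_sq_eq_one {q : ℝ → ℝ} {a b : ℝ}
    (h : HasDirichletSolution q a b) (hab : a < b) :
    ∃ u u' : ℝ → ℝ, IsSturmSolution q 0 u u' ∧ u a = 0 ∧ u b = 0 ∧ ∫ x in a..b, u x ^ 2 = 1 := by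
  obtain ⟨u, u', hu, hua, hub, x, hx, hux⟩ := h
  have hpos : 0 < ∫ x in a..b, u x ^ 2 :=
    intervalIntegral.integral_pos hab (hu.continuous.pow 2).continuousOn (fun _ _ ↦ sq_nonneg _)
      ⟨x, hx, by positivity⟩
  have hv := hu.const_mul (√(∫ x in a..b, u x ^ 2))⁻¹
  simp only [Pi.zero_apply, mul_zero] at hv
  refine ⟨_, _, hv, by simp [hua], by simp [hub], ?_⟩
  simp only [mul_pow, intervalIntegral.integral_const_mul, inv_pow, sq_sqrt hpos.le]
  exact inv_mul_cancel₀ hpos.ne'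

lemma IsSturmSolution.integral_deriv_sq_eq {q u u' : ℝ → ℝ} (hu : IsSturmSolution q 0 u u')
    (hq : Continuous q) {a b : ℝ} (hua : u a = 0) (hub : u b = 0) :
    ∫ x in a..b, u' x ^ 2 = -∫ x in a..b, q x * u x ^ 2 := by
  have hderiv (x : ℝ) : HasDerivAt (fun x ↦ u x * u' x) (u' x ^ 2 + q x * u x ^ 2) x :=
    ((hu.hasDerivAt x).mul (hu.hasDerivAt_deriv x)).congr_deriv
      (by simp only [Pi.zero_apply]; ring)
  have hu' : Continuous fun x ↦ u' x ^ 2 := hu.continuous_deriv.pow 2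
  have hqu : Continuous fun x ↦ q x * u x ^ 2 := hq.mul (hu.continuous.pow 2)
  have hparts := intervalIntegral.integral_eq_sub_of_hasDerivAt (a := a) (b := b)
    (fun x _ ↦ hderiv x) ((hu'.add hqu).intervalIntegrable _ _)
  rw [intervalIntegral.integral_add (hu'.intervalIntegrable _ _) (hqu.intervalIntegrable _ _),
    hua, hub] at hparts
  linarith

lemma setIntegral_Ioo_norm_sq {a b : ℝ} (hab : a ≤ b) (u : ℝ → ℝ) :
    ∫ x in Ioo a b, ‖u x‖ ^ 2 = ∫ x in a..b, u x ^ 2 := by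
  simp [intervalIntegral.integral_of_le hab, integral_Ioc_eq_integral_Ioo]

section Schrodinger

variable {V : ℝ → ℝ} {E h m a b : ℝ}

lemma IsSturmSolution.h1Norm_le {u u' : ℝ → ℝ}
    (hu : IsSturmSolution (fun x ↦ (V x - E) / h ^ 2) 0 u u') (hV : Continuous V) (hh : h ≠ 0)
    (hab : a ≤ b) (hm : ∀ x ∈ Icc a b, m ≤ V x) (hua : u a = 0) (hub : u b = 0)
    (hone : ∫ x in a..b, u x ^ 2 = 1) : h1Norm h (Ioo a b) u u' ≤ √(1 + (E - m)) := by
  have hc := hu.continuous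
  have henergy : ∫ x in a..b, (h * u' x) ^ 2 ≤ E - m := by
    calc ∫ x in a..b, (h * u' x) ^ 2 = ∫ x in a..b, (E - V x) * u x ^ 2 := by
          simp only [mul_pow, intervalIntegral.integral_const_mul]
          rw [hu.integral_deriv_sq_eq (by fun_prop) hua hub, ← intervalIntegral.integral_neg,
            ← intervalIntegral.integral_const_mul]
          congr! 2
          field_simp
          ring
      _ ≤ ∫ x in a..b, (E - m) * u x ^ 2 := by
          refine intervalIntegral.integral_mono_on hab
            (Continuous.intervalIntegrable (by fun_prop) _ _)
            (Continuous.intervalIntegrable (by fun_prop) _ _) fun x hx ↦ ?_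
          gcongr
          exact hm x hx
      _ = E - m := by rw [intervalIntegral.integral_const_mul, hone, mul_one]
  rw [h1Norm, setIntegral_Ioo_norm_sq hab, setIntegral_Ioo_norm_sq hab, hone]
  gcongr

theorem HasDirichletSolution.exists_normalized_eigenfunction
    (hdir : HasDirichletSolution (fun x ↦ (V x - E) / h ^ 2) a b) (hV : ContDiff ℝ (⊤ : ℕ∞) V)
    (hh : h ≠ 0) (hab : a < b) (hm : ∀ x ∈ Icc a b, m ≤ V x) :
    ∃ v : ℝ → ℝ, ContDiff ℝ (⊤ : ℕ∞) v ∧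
      (∀ x, -h ^ 2 * deriv (deriv v) x + (V x - E) * v x = 0) ∧ v b = 0 ∧ v a = 0 ∧
      l2Norm (Ioo a b) v = 1 ∧ h1Norm h (Ioo a b) v (deriv v) ≤ √(1 + (E - m)) := by
  obtain ⟨u, u', hu, hua, hub, hone⟩ := hdir.exists_integral_sq_eq_one hab
  refine ⟨u, hu.contDiff ((hV.sub contDiff_const).div_const _) contDiff_const, fun x ↦ ?_,
    hub, hua, ?_, ?_⟩
  · rw [hu.deriv_eq, hu.deriv_deriv_eq]
    simp only [Pi.zero_apply]
    field_simp
    ring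
  · rw [l2Norm, setIntegral_Ioo_norm_sq hab.le, hone, sqrt_one]
  · rw [hu.deriv_eq]
    exact hu.h1Norm_le hV.continuous hh hab.le hm hua hub hone

end Schrodinger

section Quasimode

/-- The ground state `e^{-x²/(2h)}` of the semiclassical harmonic oscillator, up to
normalization. -/
def harmonicGroundState (h x : ℝ) : ℝ := exp (-x ^ 2 / (2 * h))

/-- A fixed smooth cutoff, equal to `1` on `[-1/2, 1/2]` and supported in `[-3/4, 3/4]`. -/
def cutoff : ContDiffBump (0 : ℝ) := ⟨1 / 2, 3 / 4, by norm_num, by norm_num⟩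

/-- The commutator `[d²/dx², cutoff]` applied to the harmonic ground state: the amount by which the
truncated ground state fails to solve the eigenvalue equation. -/
def quasimodeError (h x : ℝ) : ℝ :=
  deriv (deriv cutoff) x * harmonicGroundState h x +
    2 * deriv cutoff x * (-(x / h) * harmonicGroundState h x)

variable {h : ℝ}

lemma isSturmSolution_harmonicGroundState (hh : h ≠ 0) :
    IsSturmSolution (fun x ↦ (x ^ 2 - h) / h ^ 2) 0 (harmonicGroundState h)
      (fun x ↦ -(x / h) * harmonicGroundState h x) := by
  have hderiv (x : ℝ) :
      HasDerivAt (harmonicGroundState h) (-(x / h) * harmonicGroundState h x) x := by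
    refine (((hasDerivAt_pow 2 x).fun_neg.div_const (2 * h)).exp).congr_deriv ?_
    simp only [harmonicGroundState]
    field_simp
    ring
  refine ⟨hderiv, fun x ↦ (((hasDerivAt_id' x).div_const h).fun_neg.mul
    (hderiv x)).congr_deriv ?_⟩
  simp only [Pi.zero_apply]
  field_simp
  ring

lemma IsSturmSolution.mul_of_eqOn_support {p q g g' χ : ℝ → ℝ} (hg : IsSturmSolution p 0 g g')
    (hχ : ContDiff ℝ 2 χ) (hpq : EqOn p q (Function.support χ)) :
    IsSturmSolution q (fun x ↦ deriv (deriv χ) x * g x + 2 * deriv χ x * g' x)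
      (fun x ↦ χ x * g x) (fun x ↦ deriv χ x * g x + χ x * g' x) where
  hasDerivAt x := (hχ.differentiable two_ne_zero x).hasDerivAt.mul (hg.hasDerivAt x)
  hasDerivAt_deriv x := by
    have hχ' : HasDerivAt (deriv χ) (deriv (deriv χ) x) x :=
      (hχ.differentiable_deriv_two x).hasDerivAt
    have hpqχ : p x * χ x = q x * χ x := by
      by_cases hx : χ x = 0
      · simp [hx]
      · rw [hpq hx]
    refine ((hχ'.mul (hg.hasDerivAt x)).add ((hχ.differentiable two_ne_zero x).hasDerivAt.mul
      (hg.hasDerivAt_deriv x))).congr_deriv ?_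
    simp only [Pi.zero_apply]
    linear_combination g x * hpqχ

lemma tsupport_cutoff : tsupport cutoff = Icc (-(3 / 4)) (3 / 4) := by
  rw [cutoff.tsupport_eq, Real.closedBall_eq_Icc]
  simp [cutoff]

lemma eventuallyEq_one_cutoff {x : ℝ} (hx : |x| < 1 / 2) : cutoff =ᶠ[𝓝 x] fun _ ↦ 1 :=
  cutoff.eventuallyEq_one_of_mem_ball (by simpa [cutoff] using hx)

lemma cutoff_eq_zero {x : ℝ} (hx : x ∉ Icc (-(3 / 4) : ℝ) (3 / 4)) : cutoff x = 0 :=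
  image_eq_zero_of_notMem_tsupport (tsupport_cutoff ▸ hx)

lemma continuous_deriv_cutoff : Continuous (deriv cutoff) :=
  cutoff.contDiff.continuous_deriv_one

lemma continuous_deriv_deriv_cutoff : Continuous (deriv (deriv cutoff)) :=
  (cutoff.contDiff.deriv' : ContDiff ℝ 1 (deriv cutoff)).continuous_deriv_one

lemma exists_abs_deriv_cutoff_le :
    ∃ M : ℝ, ∀ x, |deriv cutoff x| ≤ M ∧ |deriv (deriv cutoff) x| ≤ M := by
  have hsupp : HasCompactSupport (deriv cutoff) := cutoff.hasCompactSupport.deriv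
  obtain ⟨M₁, hM₁⟩ := hsupp.exists_bound_of_continuous continuous_deriv_cutoff
  obtain ⟨M₂, hM₂⟩ := hsupp.deriv.exists_bound_of_continuous continuous_deriv_deriv_cutoff
  exact ⟨max M₁ M₂, fun x ↦ ⟨(hM₁ x).trans (le_max_left _ _), (hM₂ x).trans (le_max_right _ _)⟩⟩

lemma isSturmSolution_quasimode {V : ℝ → ℝ} (hV : ∀ x ∈ Icc (-1 : ℝ) 1, V x = x ^ 2 + 1)
    (hh : h ≠ 0) :
    IsSturmSolution (fun x ↦ (V x - (1 + h)) / h ^ 2) (quasimodeError h)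
      (fun x ↦ cutoff x * harmonicGroundState h x)
      (fun x ↦ deriv cutoff x * harmonicGroundState h x +
        cutoff x * (-(x / h) * harmonicGroundState h x)) := by
  refine (isSturmSolution_harmonicGroundState hh).mul_of_eqOn_support cutoff.contDiff
    fun x hx ↦ ?_
  have hx : x ∈ Icc (-(3 / 4) : ℝ) (3 / 4) := tsupport_cutoff ▸ subset_tsupport _ hx
  have hVx := hV x ⟨by linarith [hx.1], by linarith [hx.2]⟩
  simp only [hVx]
  ring

lemma continuous_quasimodeError : Continuous (quasimodeError h) := by
  have hχ' := continuous_deriv_cutoff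
  have hχ'' := continuous_deriv_deriv_cutoff
  unfold quasimodeError harmonicGroundState
  fun_prop

lemma quasimodeError_eq_zero {x : ℝ} (hx : x ∉ Icc (-(3 / 4) : ℝ) (3 / 4)) :
    quasimodeError h x = 0 := by
  have hzero : cutoff =ᶠ[𝓝 x] 0 := notMem_tsupport_iff_eventuallyEq.1 (tsupport_cutoff ▸ hx)
  simp [quasimodeError, hzero.deriv_eq, hzero.deriv.deriv_eq]

lemma harmonicGroundState_le {r x : ℝ} (hh : 0 < h) (hr : 0 ≤ r) (hx : r ≤ |x|) :
    harmonicGroundState h x ≤ exp (-r ^ 2 / (2 * h)) := by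
  rw [harmonicGroundState, ← sq_abs x]
  gcongr

lemma abs_quasimodeError_le (hh : 0 < h) (hh1 : h ≤ 1) {M : ℝ}
    (hM : ∀ x, |deriv cutoff x| ≤ M ∧ |deriv (deriv cutoff) x| ≤ M) (x : ℝ) :
    |quasimodeError h x| ≤ 3 * M / h * exp (-1 / (8 * h)) := by
  have hM0 : 0 ≤ M := (abs_nonneg _).trans (hM 0).1
  rcases lt_or_ge |x| (1 / 2) with hx | hx
  · have hone := eventuallyEq_one_cutoff hx
    have : quasimodeError h x = 0 := by
      simp [quasimodeError, hone.deriv_eq, hone.deriv.deriv_eq]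
    rw [this, abs_zero]
    positivity
  by_cases hx' : x ∈ Icc (-(3 / 4) : ℝ) (3 / 4)
  swap
  · rw [quasimodeError_eq_zero hx', abs_zero]
    positivity
  have hx1 : |x| ≤ 1 := abs_le.2 ⟨by linarith [hx'.1], by linarith [hx'.2]⟩
  have hg : harmonicGroundState h x ≤ exp (-1 / (8 * h)) :=
    (harmonicGroundState_le hh (by norm_num) hx).trans_eq (by congr 1; field_simp; norm_num)
  have hg0 : 0 ≤ harmonicGroundState h x := (exp_pos _).le
  calc |quasimodeError h x|
      = |deriv (deriv cutoff) x + 2 * deriv cutoff x * -(x / h)| * harmonicGroundState h x := by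
        rw [quasimodeError, ← mul_assoc, ← add_mul, abs_mul, abs_of_nonneg hg0]
    _ ≤ (M + 2 * M * (1 / h)) * exp (-1 / (8 * h)) := by
        refine mul_le_mul ((abs_add_le _ _).trans ?_) hg hg0 (by positivity)
        rw [abs_mul, abs_mul, abs_two, abs_neg, abs_div, abs_of_pos hh]
        gcongr <;> simp only [hM]
    _ ≤ 3 * M / h * exp (-1 / (8 * h)) := by
        gcongr
        have : M ≤ M / h := le_div_self hM0 hh hh1
        linear_combination this

lemma integral_quasimodeError_sq_le (hh : 0 < h) (hh1 : h ≤ 1) {M : ℝ}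
    (hM : ∀ x, |deriv cutoff x| ≤ M ∧ |deriv (deriv cutoff) x| ≤ M) {a b : ℝ} (ha : a ≤ -1)
    (hb : 1 ≤ b) :
    ∫ x in a..b, quasimodeError h x ^ 2 ≤ 2 * (3 * M / h * exp (-1 / (8 * h))) ^ 2 := by
  have hsupp : Function.support (fun x ↦ quasimodeError h x ^ 2) ⊆ Ioc (-1) 1 := by
    intro x hx
    have hx : x ∈ Icc (-(3 / 4) : ℝ) (3 / 4) := by
      by_contra hx'
      exact hx (by simp [quasimodeError_eq_zero hx'])
    exact ⟨by linarith [hx.1], by linarith [hx.2]⟩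
  rw [intervalIntegral.integral_eq_integral_of_support_subset (hsupp.trans (by gcongr)),
    ← intervalIntegral.integral_eq_integral_of_support_subset hsupp]
  calc ∫ x in (-1)..1, quasimodeError h x ^ 2
      ≤ (3 * M / h * exp (-1 / (8 * h))) ^ 2 * |1 - (-1)| := by
        refine (le_norm_self _).trans <|
          intervalIntegral.norm_integral_le_of_norm_le_const fun x _ ↦ ?_
        rw [norm_pow]
        gcongr
        exact abs_quasimodeError_le hh hh1 hM x
    _ = 2 * (3 * M / h * exp (-1 / (8 * h))) ^ 2 := by norm_num; ring

lemma le_integral_quasimode_sq (hh : 0 < h) (hh2 : h ≤ 1 / 2) {a b : ℝ} (ha : a ≤ -1)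
    (hb : 1 ≤ b) : h ≤ ∫ x in a..b, (cutoff x * harmonicGroundState h x) ^ 2 := by
  have hc : Continuous fun x ↦ (cutoff x * harmonicGroundState h x) ^ 2 := by
    have := cutoff.continuous
    have := (isSturmSolution_harmonicGroundState hh.ne').continuous
    fun_prop
  have hle (x : ℝ) (hx : x ∈ Icc (-h) h) :
      1 / 2 ≤ (cutoff x * harmonicGroundState h x) ^ 2 := by
    have hcut : cutoff x = 1 := cutoff.one_of_mem_closedBall <| by
      simpa [cutoff] using (abs_le.2 hx).trans (by simpa using hh2)
    have hx2 : x ^ 2 ≤ h ^ 2 := sq_le_sq' hx.1 hx.2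
    calc (1 / 2 : ℝ) ≤ -x ^ 2 / h + 1 := by
          have : x ^ 2 / h ≤ h := by rw [div_le_iff₀ hh]; linarith
          rw [neg_div]; linarith
      _ ≤ exp (-x ^ 2 / h) := add_one_le_exp _
      _ = (cutoff x * harmonicGroundState h x) ^ 2 := by
          rw [hcut, one_mul, harmonicGroundState, ← exp_nat_mul]
          congr 1
          push_cast
          field_simp
  calc h = ∫ x in (-h)..h, (1 / 2 : ℝ) := by simp; ring
    _ ≤ ∫ x in (-h)..h, (cutoff x * harmonicGroundState h x) ^ 2 :=
        intervalIntegral.integral_mono_on (by linarith) (by simp) (hc.intervalIntegrable _ _) hle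
    _ ≤ ∫ x in a..b, (cutoff x * harmonicGroundState h x) ^ 2 :=
        intervalIntegral.integral_mono_interval (by linarith) (by linarith) (by linarith)
          (.of_forall fun x ↦ sq_nonneg _) (hc.intervalIntegrable _ _)

theorem exists_hasDirichletSolution_near_ground_energy {V : ℝ → ℝ} (hV : Continuous V)
    (hVwell : ∀ x ∈ Icc (-1 : ℝ) 1, V x = x ^ 2 + 1) (hh : 0 < h) (hh2 : h ≤ 1 / 2) {M : ℝ}
    (hM : ∀ x, |deriv cutoff x| ≤ M ∧ |deriv (deriv cutoff) x| ≤ M) {a b : ℝ} (ha : a ≤ -1)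
    (hb : 1 ≤ b) :
    ∃ E : ℝ, |E - (1 + h)| ≤ 5 * M * exp (-1 / (8 * h)) ∧
      HasDirichletSolution (fun x ↦ (V x - E) / h ^ 2) a b := by
  have hM0 : 0 ≤ M := (abs_nonneg _).trans (hM 0).1
  have hmass := le_integral_quasimode_sq hh hh2 ha hb
  have herror : ∫ x in a..b, quasimodeError h x ^ 2 ≤
      (5 * M / h ^ 2 * exp (-1 / (8 * h))) ^ 2 *
        ∫ x in a..b, (cutoff x * harmonicGroundState h x) ^ 2 := by
    calc ∫ x in a..b, quasimodeError h x ^ 2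
        ≤ 2 * (3 * M / h * exp (-1 / (8 * h))) ^ 2 :=
          integral_quasimodeError_sq_le hh (by linarith) hM ha hb
      _ = 18 * (M / h * exp (-1 / (8 * h))) ^ 2 := by ring
      _ ≤ 25 / h * (M / h * exp (-1 / (8 * h))) ^ 2 := by
          gcongr
          rw [le_div_iff₀ hh]
          linarith
      _ = (5 * M / h ^ 2 * exp (-1 / (8 * h))) ^ 2 * h := by
          field_simp
          ring
      _ ≤ _ := by gcongr
  have hcut_a : cutoff a = 0 := cutoff_eq_zero fun hx ↦ by linarith [hx.1]
  have hcut_b : cutoff b = 0 := cutoff_eq_zero fun hx ↦ by linarith [hx.2]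
  obtain ⟨c, hc, hdir⟩ := exists_abs_le_hasDirichletSolution
    (q := fun x ↦ (V x - (1 + h)) / h ^ 2) (by fun_prop) continuous_quasimodeError
    (isSturmSolution_quasimode hVwell hh.ne') (by linarith)
    (by rw [hcut_a, zero_mul]) (by rw [hcut_b, zero_mul])
    (by positivity) (hh.trans_le hmass) herror
  refine ⟨1 + h - h ^ 2 * c, ?_, ?_⟩
  · calc |1 + h - h ^ 2 * c - (1 + h)| = h ^ 2 * |c| := by
          rw [sub_sub_cancel_left, abs_neg, abs_mul, abs_of_nonneg (sq_nonneg h)]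
      _ ≤ h ^ 2 * (5 * M / h ^ 2 * exp (-1 / (8 * h))) := by gcongr
      _ = 5 * M * exp (-1 / (8 * h)) := by field_simp
  · convert hdir using 2
    field_simp
    ring

end Quasimode

theorem dirichlet_eigenfunction_near_ground_state_general
    (V : ℝ → ℝ) (hV : ContDiff ℝ (⊤ : ℕ∞) V) (hVwell : ∀ x ∈ Icc (-1 : ℝ) 1, V x = x ^ 2 + 1)
    (m : ℝ) :
    ∃ C > (0 : ℝ), ∃ h₀ > (0 : ℝ), ∀ h : ℝ, 0 < h → h < h₀ →
      ∀ a ≤ (-1 : ℝ), ∀ b ≥ (1 : ℝ), (∀ x ∈ Icc a b, m ≤ V x) →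
      ∃ E₀ : ℝ, ∃ v : ℝ → ℝ,
        ContDiff ℝ (⊤ : ℕ∞) v ∧
        (∀ x, -h ^ 2 * deriv (deriv v) x + (V x - E₀) * v x = 0) ∧
        v b = 0 ∧ v a = 0 ∧
        l2Norm (Ioo a b) v = 1 ∧
        h1Norm h (Ioo a b) v (deriv v) ≤ C ∧
        |E₀ - (1 + h)| ≤ C * exp (-1 / (10 * h)) := by
  obtain ⟨M, hM⟩ := exists_abs_deriv_cutoff_le
  have hM0 : 0 ≤ M := (abs_nonneg _).trans (hM 0).1
  have hm0 : 0 ≤ |m| := abs_nonneg m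
  refine ⟨5 * M + 3 + |m|, by positivity, 1 / 2, by norm_num, fun h hh hh2 a ha b hb hm ↦ ?_⟩
  obtain ⟨E, hE, hdir⟩ :=
    exists_hasDirichletSolution_near_ground_energy hV.continuous hVwell hh hh2.le hM ha hb
  obtain ⟨v, hv, heq, hvb, hva, hone, hH1⟩ :=
    hdir.exists_normalized_eigenfunction hV hh.ne' (by linarith) hm
  have hexp : exp (-1 / (8 * h)) ≤ exp (-1 / (10 * h)) := by
    simp only [neg_div]
    gcongr
    norm_num
  have hexp_one : exp (-1 / (8 * h)) ≤ 1 := exp_le_one_iff.2 <|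
    div_nonpos_of_nonpos_of_nonneg (by norm_num) (by positivity)
  have hE_sub_le : E - (1 + h) ≤ 5 * M :=
    (le_abs_self _).trans (hE.trans (mul_le_of_le_one_right (by positivity) hexp_one))
  have henergy : 1 + (E - m) ≤ 5 * M + 3 + |m| := by linarith [neg_abs_le m]
  refine ⟨E, v, hv, heq, hvb, hva, hone, hH1.trans (sqrt_le_iff.2 ⟨by positivity, ?_⟩),
    hE.trans ?_⟩
  · exact henergy.trans (le_self_pow₀ (by linarith) two_ne_zero)
  · gcongr
    linarith

/-- For small `h` and any `R̃ ∈ [R, R+1]` there is a normalized Dirichlet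
eigenfunction `v` of `P(h)` on `[-R̃, R̃]` with eigenvalue `E₀ = 1 + h + O(e^{-1/(10h)})`
and bounded semiclassical `H¹_h` norm. -/
theorem dirichlet_eigenfunction_near_ground_state
    (V : ℝ → ℝ)
    (hV_smooth : ContDiff ℝ (⊤ : ℕ∞) V) (hV_comp : HasCompactSupport V)
    (hV_nonneg : ∀ x, 0 ≤ V x) (hV_even : ∀ x, V (-x) = V x)
    (hV_inner : ∀ x ∈ Set.Icc (-1 : ℝ) 1, V x = x ^ 2 + 1)
    (hV_slope : ∀ x ∈ Set.Icc (2 : ℝ) 3.5, V x = 4 - x)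
    (hV_lt : ∀ x : ℝ, 3 < x → V x < 1)
    (hV_supp : tsupport V ⊆ Set.Icc (-5 : ℝ) 5)
    (R : ℝ) (hR : 5 < R) :
    ∃ C > (0 : ℝ), ∃ h₀ > (0 : ℝ), ∀ h : ℝ, 0 < h → h < h₀ →
      ∀ R' ∈ Set.Icc R (R + 1),
      ∃ E₀ : ℝ, ∃ v : ℝ → ℝ,
        ContDiff ℝ (⊤ : ℕ∞) v ∧
        (∀ x ∈ Set.Icc (-R') R', -h ^ 2 * deriv (deriv v) x + (V x - E₀) * v x = 0) ∧
        v R' = 0 ∧ v (-R') = 0 ∧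
        l2Norm (Set.Ioo (-R') R') v = 1 ∧
        h1Norm h (Set.Ioo (-R') R') v (deriv v) ≤ C ∧
        |E₀ - (1 + h)| ≤ C * Real.exp (-1 / (10 * h)) := by
  obtain ⟨C, hC, h₀, hh₀, hmain⟩ :=
    dirichlet_eigenfunction_near_ground_state_general V hV_smooth hV_inner 0
  refine ⟨C, hC, h₀, hh₀, fun h hh hlt R' hR' ↦ ?_⟩
  obtain ⟨E₀, v, hv, heq, hrest⟩ := hmain h hh hlt (-R') (by linarith [hR'.1]) R'
    (by linarith [hR'.1]) fun x _ ↦ hV_nonneg x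
  exact ⟨E₀, v, hv, fun x _ ↦ heq x, hrest⟩
end
end
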